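/- arXiv:1604.02947 — 4 statements merged into one kernel-verified Lean document; each statement's English description precedes it below -/
import Mathlib

section
/- Let X be a pure d-dimensional simplicial complex that is an α-skeleton expander with 0 < α < (2^(1/2^d) − 1)/√2. Then X is an ε-colorful expander for ε = ((2^(1/2^d) − 1 − √2·α)/(2√2·d))^d. -/
/-!
Delete vertices one at a time, in uniformly random order, from a uniformly random top face.
This gives a descending chain `P_{d+1} ⊃ P_d ⊃ ⋯ ⊃ P_0 = ∅`, with `|P_k| = k`, whose marginals
are the norms: `SC.prob σ` is the probability that the chain passes through `σ`.

Fix a cochain `W` of faces of cardinality `n`, put `η = 2 ^ (-1 / 2 ^ d)`, and call a face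
`σ` of cardinality `k < n` fat when its fat extensions have norm at least
`t_k = η ^ 2 ^ (n - 1 - k)` in the link of `σ`; at cardinality `n`, fat means "in `W`". Let
`q_k = Pr[P_k fat]` and `c_{k+1} = Pr[P_{k+1} fat, P_k not fat]`.

* `q_{k+1} ≥ t_k q_k`. If `∅` were fat, then `q_n ≥ η ^ (2 ^ n - 1) > 1 / 2`; hence for
  `‖W‖ = q_n ≤ 1 / 2` the empty face is not fat.
* `q_{k+1} ≤ c_{k+1} + q_k`, so `‖W‖ ≤ c_1 + ⋯ + c_n`.
* Let `σ` be a face of cardinality `k` that is not fat. Skeleton expansion in its link bounds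
  the weight of the pairs `σ ∪ {v, u}` with `σ ∪ {v}` and `σ ∪ {u}` both fat by a proportion
  `t_k + α` of the fat `σ ∪ {v}`. Since a proportion at least `t_{k+1}` of the extensions of a
  fat `σ ∪ {v}` is fat, a proportion at least `t_{k+1} - t_k - α` consists of fat
  `σ ∪ {v, u}` with `σ ∪ {u}` not fat. Exchanging `u` and `v`, these are exits from fatness
  one level up: `c_{k+2} ≥ (t_{k+1} - t_k - α) c_{k+1}` (`exitWeight_step`). At the top level
  the same argument, with all extensions in place of the fat ones, gives
  `‖ψ(W)‖ ≥ (1 - t_{n-1} - α) c_n` (`exitWeight_le_psi`).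
* Every factor is at least `β = (1 / η - 1) / √2 - α` (`gap_le`, `gap_le_top`).

Together these give `β ^ n ‖W‖ ≤ n ‖ψ(W)‖` (`pow_mul_norm_le`), which is stronger than the
asserted bound.
-/

open Finset

open scoped Classical

noncomputable section

/-- A pure `d`-dimensional simplicial complex on a finite vertex set `V`: a collection of
finite subsets of `V` (the faces), containing the empty face, closed under taking subsets,
in which every face is contained in a face of cardinality `d+1`. -/
structure SC (V : Type) [DecidableEq V] [Fintype V] (d : ℕ) where
  faces : Finset (Finset V)
  empty_mem : ∅ ∈ faces
  down_closed : ∀ σ ∈ faces, ∀ τ ⊆ σ, τ ∈ faces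
  pure : ∀ σ ∈ faces, ∃ τ ∈ faces, σ ⊆ τ ∧ τ.card = d + 1

namespace SC

variable {V : Type} [DecidableEq V] [Fintype V] {d : ℕ}

/-- The faces of cardinality `k`, i.e. the set `X(k-1)` of `(k-1)`-dimensional faces. -/
def fc (X : SC V d) (k : ℕ) : Finset (Finset V) :=
  X.faces.filter fun σ => σ.card = k

/-- The degree of a face: the number of top (`d`-dimensional) faces containing it. -/
def deg (X : SC V d) (σ : Finset V) : ℕ :=
  ((X.fc (d + 1)).filter fun τ => σ ⊆ τ).card

/-- The norm of a set `W` of faces of cardinality `k`: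
`‖W‖ = (Σ_{σ∈W} deg σ) / (Σ_{τ∈X(k-1)} deg τ)`. -/
def norm (X : SC V d) (k : ℕ) (W : Finset (Finset V)) : ℝ :=
  (∑ σ ∈ (X.fc k).filter (· ∈ W), (X.deg σ : ℝ)) / ∑ σ ∈ X.fc k, (X.deg σ : ℝ)

/-- `‖A_σ‖_σ`: the norm, computed inside the link of `σ`, of the localization to the link
of a set `A` of cardinality-`k` faces of `X`.  (The faces of the link of `σ` correspond
bijectively to the faces `ρ ⊇ σ` of `X` via `τ ↦ σ ∪ τ`, and this correspondence
preserves degrees.) -/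
def linkNorm (X : SC V d) (σ : Finset V) (k : ℕ) (A : Finset (Finset V)) : ℝ :=
  (∑ ρ ∈ (X.fc k).filter (fun ρ => σ ⊆ ρ ∧ ρ ∈ A), (X.deg ρ : ℝ)) /
    ∑ ρ ∈ (X.fc k).filter (fun ρ => σ ⊆ ρ), (X.deg ρ : ℝ)

/-- For a set `S` of vertices, the norm `‖·‖_σ` in the link of `σ` of the set of
`(m-1)`-dimensional faces of the link all of whose vertices lie in `S`.
For `m = 1` this is `‖S‖_σ` and for `m = 2` it is `‖E(S)‖_σ`. -/
def linkSubsetNorm (X : SC V d) (σ : Finset V) (m : ℕ) (S : Finset V) : ℝ :=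
  (∑ ρ ∈ (X.fc (σ.card + m)).filter (fun ρ => σ ⊆ ρ ∧ ρ \ σ ⊆ S), (X.deg ρ : ℝ)) /
    ∑ ρ ∈ (X.fc (σ.card + m)).filter (fun ρ => σ ⊆ ρ), (X.deg ρ : ℝ)

/-- `X` is an `α`-skeleton expander: for every face `σ ∈ X` (including `σ = ∅`) and every
set `S` of vertices of the link of `σ`, `‖E(S)‖_σ ≤ ‖S‖_σ (‖S‖_σ + α)`. -/
def IsSkeletonExpander (X : SC V d) (α : ℝ) : Prop :=
  ∀ σ ∈ X.faces, ∀ S : Finset V,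
    X.linkSubsetNorm σ 2 S ≤ X.linkSubsetNorm σ 1 S * (X.linkSubsetNorm σ 1 S + α)

/-- The expanding faces `ψ(W)` of a set `W` of cardinality-`k` faces: the
cardinality-`(k+1)` faces containing both a cardinality-`k` face in `W` and a
cardinality-`k` face not in `W`. -/
def psi (X : SC V d) (k : ℕ) (W : Finset (Finset V)) : Finset (Finset V) :=
  (X.fc (k + 1)).filter fun τ =>
    (∃ σ ⊆ τ, σ.card = k ∧ σ ∈ W) ∧ ∃ σ ⊆ τ, σ.card = k ∧ σ ∉ W

/-- `X` is an `ε`-colorful expander: for every `0 ≤ i < d` and every `i`-cochain `W` with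
`0 < ‖W‖ ≤ 1/2`, one has `‖ψ(W)‖/‖W‖ ≥ ε`. -/
def IsColorfulExpander (X : SC V d) (ε : ℝ) : Prop :=
  ∀ i : ℕ, i < d → ∀ W ⊆ X.fc (i + 1),
    0 < X.norm (i + 1) W → X.norm (i + 1) W ≤ 1 / 2 →
    ε ≤ X.norm (i + 2) (X.psi (i + 1) W) / X.norm (i + 1) W

/-- The container `Γ(W)` of a set `W` of cardinality-`k` faces: the cardinality-`(k+1)`
faces containing at least one cardinality-`k` face of `W`. -/
def container (X : SC V d) (k : ℕ) (W : Finset (Finset V)) : Finset (Finset V) :=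
  (X.fc (k + 1)).filter fun τ => ∃ σ ⊆ τ, σ.card = k ∧ σ ∈ W

/-- Fat faces: for an `i`-cochain `W` and fatness constant `η`, `X.fat i W η m` is the
set `S^{i-m}(W)` of fat faces of dimension `i - m` (so of cardinality `i + 1 - m`);
`m = i + 1` gives `S^{-1}(W)`. -/
def fat (X : SC V d) (i : ℕ) (W : Finset (Finset V)) (η : ℝ) : ℕ → Finset (Finset V)
  | 0 => (X.fc (i + 1)).filter (· ∈ W)
  | m + 1 => (X.fc (i - m)).filter fun σ =>
      η ^ 2 ^ m ≤ X.linkNorm σ (i - m + 1) (fat X i W η m)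

/-- Full faces: `X.full i W η j` is `F^j(W)`, the set of cardinality-`(j+1)` faces all of
whose cardinality-`j` subsets lie in `S^{j-1}(W) = X.fat i W η (i + 1 - j)`. -/
def full (X : SC V d) (i : ℕ) (W : Finset (Finset V)) (η : ℝ) (j : ℕ) :
    Finset (Finset V) :=
  (X.fc (j + 1)).filter fun τ => ∀ σ ⊆ τ, σ.card = j → σ ∈ X.fat i W η (i + 1 - j)

/-- `X.prNI ka kb A B` is the probability `Pr[P_{ka-1} ∈ A ∧ P_{kb-1} ∉ B]` for the chain
`P_d ⊃ P_{d-1} ⊃ ⋯` in which `P_d` is a uniformly random top face and each `P_{l-1}` is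
obtained from `P_l` by deleting a uniformly random vertex.  (Given `P_{ka-1} = σ`,
the face `P_{kb-1}` is a uniformly random cardinality-`kb` subset of `σ`, and
`Pr[P_{ka-1} = σ] = deg σ / Σ_{τ ∈ X(ka-1)} deg τ`.) -/
def prNI (X : SC V d) (ka kb : ℕ) (A B : Finset (Finset V)) : ℝ :=
  (∑ σ ∈ (X.fc ka).filter (· ∈ A),
      (X.deg σ : ℝ) * (((σ.powersetCard kb).filter (· ∉ B)).card : ℝ)) /
    ((ka.choose kb : ℝ) * ∑ σ ∈ X.fc ka, (X.deg σ : ℝ))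

end SC

/-! ### Multigraphs, given by symmetric adjacency-count matrices -/

/-- Degree of a vertex in the multigraph with adjacency counts `A`. -/
def mdeg {U : Type} [Fintype U] (A : U → U → ℕ) (v : U) : ℕ := ∑ u, A v u

/-- The transition matrix `DA` of the random walk on the multigraph `A`. -/
def transition {U : Type} [Fintype U] (A : U → U → ℕ) : Matrix U U ℝ :=
  Matrix.of fun u v => (A u v : ℝ) / (mdeg A u : ℝ)

/-- The normalized adjacency matrix `Ã = D^(1/2) A D^(1/2)`. -/
def normAdj {U : Type} [Fintype U] (A : U → U → ℕ) : Matrix U U ℝ :=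
  Matrix.of fun u v => (A u v : ℝ) / (Real.sqrt (mdeg A u) * Real.sqrt (mdeg A v))

/-- The stationary distribution `π(v) = deg v / Σ_u deg u`. -/
def statDist {U : Type} [Fintype U] (A : U → U → ℕ) (v : U) : ℝ :=
  (mdeg A v : ℝ) / ∑ u, (mdeg A u : ℝ)

/-- Maximum degree. -/
def dmaxDeg {U : Type} [Fintype U] (A : U → U → ℕ) : ℕ := ⨆ v, mdeg A v

/-- Minimum degree. -/
def dminDeg {U : Type} [Fintype U] (A : U → U → ℕ) : ℕ := ⨅ v, mdeg A v

/-- The random walk on the multigraph `A` is `μ`-rapidly mixing: for every initial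
probability distribution `π0` and every `t`, `‖π0 (DA)^t − π‖₂ ≤ √(dmax/dmin) μ^t`. -/
def IsRapidMixing {U : Type} [Fintype U] [DecidableEq U] (A : U → U → ℕ) (μ : ℝ) : Prop :=
  ∀ π0 : U → ℝ, (∀ v, 0 ≤ π0 v) → ∑ v, π0 v = 1 → ∀ t : ℕ,
    Real.sqrt (∑ v, (Matrix.vecMul π0 (transition A ^ t) v - statDist A v) ^ 2) ≤
      Real.sqrt ((dmaxDeg A : ℝ) / (dminDeg A : ℝ)) * μ ^ t

/-- The lazy version of a multigraph: add `deg v` self-loops at every vertex `v`. -/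
def lazy {U : Type} [Fintype U] [DecidableEq U] (A : U → U → ℕ) : U → U → ℕ :=
  fun u v => A u v + if u = v then mdeg A u else 0

/-- `|E(S, S̄)|`: the number of edges with one endpoint in `S` and one in its complement. -/
def cutEdges {U : Type} [Fintype U] [DecidableEq U] (A : U → U → ℕ) (S : Finset U) : ℝ :=
  ∑ u ∈ S, ∑ v ∈ Sᶜ, (A u v : ℝ)

/-- `vol S = Σ_{v ∈ S} deg v`. -/
def vol {U : Type} [Fintype U] (A : U → U → ℕ) (S : Finset U) : ℝ :=
  ∑ v ∈ S, (mdeg A v : ℝ)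

/-- The conductance `Φ(G) = min { |E(S,S̄)|/vol S : ∅ ≠ S, vol S ≤ vol V / 2 }`. -/
def conductance {U : Type} [Fintype U] [DecidableEq U] (A : U → U → ℕ) : ℝ :=
  sInf { x : ℝ | ∃ S : Finset U, S.Nonempty ∧ vol A S ≤ vol A Finset.univ / 2 ∧
    x = cutEdges A S / vol A S }

/-- `|E(T)|`: the number of edges with both endpoints in `T`. -/
def edgesWithin {U : Type} [Fintype U] (A : U → U → ℕ) (T : Finset U) : ℝ :=
  ((∑ u ∈ T, ∑ v ∈ T, (A u v : ℝ)) + ∑ v ∈ T, (A v v : ℝ)) / 2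

/-- The bipartiteness ratio
`β(G) = min {(|E(S,S̄)| + 2(|E(S1)| + |E(S2)|))/vol S : S = S1 ⊔ S2 ≠ ∅}`. -/
def bipRatio {U : Type} [Fintype U] [DecidableEq U] (A : U → U → ℕ) : ℝ :=
  sInf { x : ℝ | ∃ S1 S2 : Finset U, (S1 ∪ S2).Nonempty ∧ Disjoint S1 S2 ∧
    x = (cutEdges A (S1 ∪ S2) + 2 * (edgesWithin A S1 + edgesWithin A S2)) /
      vol A (S1 ∪ S2) }

/-- The adjacency counts of the `i`-graph `G_i(X)`: its vertices are the `i`-faces of `X`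
(cardinality `i+1`), and two neighboring `i`-faces `σ ∼ τ` (i.e. `σ ∪ τ ∈ X(i+1)`) are
joined by `deg (σ ∪ τ)` parallel edges. -/
def SC.adjG {V : Type} [DecidableEq V] [Fintype V] {d : ℕ} (X : SC V d) (i : ℕ) :
    {σ // σ ∈ X.fc (i + 1)} → {σ // σ ∈ X.fc (i + 1)} → ℕ :=
  fun σ τ => if σ.1 ∪ τ.1 ∈ X.fc (i + 2) then X.deg (σ.1 ∪ τ.1) else 0

end

/-! ### Double counting over sets of vertices -/

section Counting

variable {V : Type} [DecidableEq V] [Fintype V]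

/-- Double counting of pairs (face, facet), indexed either by the facet and the added vertex
or by the face and the removed vertex. -/
lemma sum_insert_eq_sum_erase (k : ℕ) (F : Finset V → V → ℝ) :
    ∑ σ ∈ powersetCard k univ, ∑ v ∈ σᶜ, F σ v =
      ∑ τ ∈ powersetCard (k + 1) univ, ∑ v ∈ τ, F (τ.erase v) v := by
  rw [Finset.sum_sigma', Finset.sum_sigma']
  refine Finset.sum_bij' (fun x _ => ⟨insert x.2 x.1, x.2⟩) (fun x _ => ⟨x.1.erase x.2, x.2⟩)
    ?_ ?_ ?_ ?_ ?_
  · rintro ⟨σ, v⟩ h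
    simp only [mem_sigma, mem_powersetCard, mem_compl, subset_univ, true_and] at h ⊢
    exact ⟨by rw [card_insert_of_notMem h.2, h.1], mem_insert_self _ _⟩
  · rintro ⟨τ, v⟩ h
    simp only [mem_sigma, mem_powersetCard, mem_compl, subset_univ, true_and] at h ⊢
    exact ⟨by rw [card_erase_of_mem h.2, h.1]; rfl, notMem_erase _ _⟩
  · rintro ⟨σ, v⟩ h
    simp only [mem_sigma, mem_compl] at h
    simp [erase_insert h.2]
  · rintro ⟨τ, v⟩ h
    simp only [mem_sigma] at h
    simp [insert_erase h.2]
  · rintro ⟨σ, v⟩ h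
    simp only [mem_sigma, mem_compl] at h
    simp [erase_insert h.2]

/-- A sum over sets of cardinality `k + 1`, each counted once for every facet. -/
lemma sum_insert_eq_mul (k : ℕ) (g : Finset V → ℝ) :
    ∑ σ ∈ powersetCard k univ, ∑ v ∈ σᶜ, g (insert v σ) =
      (k + 1) * ∑ τ ∈ powersetCard (k + 1) univ, g τ := by
  rw [sum_insert_eq_sum_erase k (fun σ v => g (insert v σ)), mul_sum]
  refine sum_congr rfl fun τ hτ => ?_
  rw [sum_congr rfl fun v hv => by rw [insert_erase hv], sum_const, nsmul_eq_mul,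
    (mem_powersetCard.1 hτ).2]
  push_cast
  rfl

/-- Each face of cardinality `m + 1` containing `σ` arises from `m + 1 - |σ|` faces of
cardinality `m` containing `σ`. -/
lemma sum_superset_insert (σ : Finset V) (m r : ℕ) (hr : σ.card + r = m + 1)
    (g : Finset V → ℝ) :
    ∑ ρ ∈ powersetCard m univ, (if σ ⊆ ρ then ∑ u ∈ ρᶜ, g (insert u ρ) else 0) =
      r * ∑ τ ∈ powersetCard (m + 1) univ, if σ ⊆ τ then g τ else 0 := by
  have h := sum_insert_eq_sum_erase m (fun ρ u => if σ ⊆ ρ then g (insert u ρ) else 0)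
  rw [mul_sum]
  refine Eq.trans (sum_congr rfl fun ρ _ => ?_) (h.trans (sum_congr rfl fun τ hτ => ?_))
  · split_ifs <;> simp
  · by_cases hs : σ ⊆ τ
    · rw [if_pos hs, ← sum_filter]
      have : τ.filter (fun v => σ ⊆ τ.erase v) = τ \ σ := by
        ext v
        simp only [mem_filter, mem_sdiff, subset_erase]
        tauto
      rw [this, sum_congr rfl fun v hv => by rw [insert_erase (mem_sdiff.1 hv).1], sum_const,
        nsmul_eq_mul, card_sdiff_of_subset hs, (mem_powersetCard.1 hτ).2, ← hr]
      simp
    · rw [if_neg hs, mul_zero]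
      refine sum_eq_zero fun v _ => if_neg fun h' => hs (h'.trans (erase_subset _ _))

lemma sum_superset_one (σ : Finset V) (g : Finset V → ℝ) :
    ∑ τ ∈ powersetCard (σ.card + 1) univ, (if σ ⊆ τ then g τ else 0) =
      ∑ v ∈ σᶜ, g (insert v σ) := by
  have h := sum_superset_insert σ σ.card 1 rfl g
  rw [Nat.cast_one, one_mul] at h
  rw [← h, sum_eq_single σ]
  · simp
  · intro ρ hρ hne
    refine if_neg fun hs => hne ?_
    exact (eq_of_subset_of_card_le hs (mem_powersetCard.1 hρ).2.le).symm
  · simp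

lemma sum_superset_two (σ : Finset V) (g : Finset V → ℝ) :
    2 * ∑ τ ∈ powersetCard (σ.card + 2) univ, (if σ ⊆ τ then g τ else 0) =
      ∑ v ∈ σᶜ, ∑ u ∈ (insert v σ)ᶜ, g (insert u (insert v σ)) := by
  rw [← sum_superset_one σ (fun ρ => ∑ u ∈ ρᶜ, g (insert u ρ)),
    sum_superset_insert σ (σ.card + 1) 2 rfl g]
  norm_num

/-- Ordered pairs of distinct vertices outside `σ` can be enumerated in either order. -/
lemma sum_pair_swap (σ : Finset V) (H : V → V → ℝ) :
    ∑ v ∈ σᶜ, ∑ u ∈ (insert v σ)ᶜ, H v u = ∑ u ∈ σᶜ, ∑ v ∈ (insert u σ)ᶜ, H v u := by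
  refine Finset.sum_comm' fun v u => ?_
  simp only [mem_compl, mem_insert]
  tauto

end Counting

/-! ### Exits from a family of sets along the chain -/

section Core

variable {V : Type} [DecidableEq V] [Fintype V]

omit [DecidableEq V] [Fintype V] in
lemma sum_nonneg_ite {p : Finset V → ℝ} (hp : ∀ σ, 0 ≤ p σ) {c : Prop} [Decidable c]
    {τ : Finset V} : 0 ≤ if c then p τ else 0 := by
  split_ifs <;> simp [hp]

/-- The weight of the pairs `σ ⊂ σ ∪ {v}` with `|σ| = k`, `σ` outside `T` and `σ ∪ {v}` in
`T`.  If `p` is the law of the random descending chain, it is `k + 1` times the probability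
that the chain leaves `T` between cardinalities `k + 1` and `k`. -/
noncomputable def exitWeight (p : Finset V → ℝ) (T : Finset V → Prop) (k : ℕ) : ℝ :=
  ∑ σ ∈ powersetCard k univ, if T σ then 0 else
    ∑ v ∈ σᶜ, if T (insert v σ) then p (insert v σ) else 0

/-- The total weight of the sets of cardinality `k` in `T`. -/
noncomputable def levelWeight (p : Finset V → ℝ) (T : Finset V → Prop) (k : ℕ) : ℝ :=
  ∑ σ ∈ powersetCard k univ, if T σ then p σ else 0

lemma levelWeight_succ (p : Finset V → ℝ) (T : Finset V → Prop) (k : ℕ) :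
    (k + 1) * levelWeight p T (k + 1) =
      ∑ σ ∈ powersetCard k univ, ∑ v ∈ σᶜ, if T (insert v σ) then p (insert v σ) else 0 :=
  (sum_insert_eq_mul k (fun τ => if T τ then p τ else 0)).symm

lemma exitWeight_nonneg {p : Finset V → ℝ} (hp : ∀ σ, 0 ≤ p σ) (T : Finset V → Prop) (k : ℕ) :
    0 ≤ exitWeight p T k := by
  refine sum_nonneg fun σ _ => ?_
  split_ifs
  · exact le_rfl
  · exact sum_nonneg fun v _ => by split_ifs <;> simp [hp]

/-- Fatness propagates upwards: each fat set carries a `t`-fraction of fat extensions. -/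
lemma mul_levelWeight_le {p : Finset V → ℝ} (hp : ∀ σ, 0 ≤ p σ) {T : Finset V → Prop} {k : ℕ}
    {t : ℝ}
    (hT : ∀ σ, σ.card = k → T σ →
      t * ((k + 1) * p σ) ≤ ∑ v ∈ σᶜ, if T (insert v σ) then p (insert v σ) else 0) :
    t * levelWeight p T k ≤ levelWeight p T (k + 1) := by
  have h : (k + 1) * (t * levelWeight p T k) ≤ (k + 1) * levelWeight p T (k + 1) := by
    rw [levelWeight_succ, levelWeight, mul_sum, mul_sum]
    refine sum_le_sum fun σ hσ => ?_
    by_cases h : T σ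
    · rw [if_pos h]
      linarith [hT σ (mem_powersetCard.1 hσ).2 h]
    · rw [if_neg h]
      simp only [mul_zero]
      exact sum_nonneg fun v _ => by split_ifs <;> simp [hp]
  exact le_of_mul_le_mul_left h (by positivity)

/-- A chain in `T` at cardinality `k + 1` either leaves `T` or is in `T` at cardinality `k`. -/
lemma levelWeight_succ_le {p : Finset V → ℝ} (hp : ∀ σ, 0 ≤ p σ) (T : Finset V → Prop) {k : ℕ}
    (hsum : ∀ σ : Finset V, σ.card = k → ∑ v ∈ σᶜ, p (insert v σ) = (k + 1) * p σ) :
    (k + 1) * levelWeight p T (k + 1) ≤ exitWeight p T k + (k + 1) * levelWeight p T k := by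
  rw [levelWeight_succ, exitWeight, levelWeight, mul_sum, ← sum_add_distrib]
  refine sum_le_sum fun σ hσ => ?_
  by_cases h : T σ
  · rw [if_pos h, if_pos h, zero_add, ← hsum σ (mem_powersetCard.1 hσ).2]
    exact sum_le_sum fun v _ => by split_ifs <;> simp [hp]
  · simp [h]

/-- Given the skeleton bound at a thin `σ`, among the two-vertex extensions `σ ∪ {v, u}` with
`σ ∪ {v} ∈ T` and `σ ∪ {v, u}` in `Q`, those with `σ ∪ {u} ∉ T` retain a proportion
`t' - s`, where `t'` is a lower bound on the proportion of extensions in `Q`. -/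
lemma local_step {p : Finset V → ℝ} (hp : ∀ σ, 0 ≤ p σ) {T Q : Finset V → Prop} {k : ℕ}
    {t' s : ℝ} {σ : Finset V} (hσ : σ.card = k)
    (hQ : ∀ τ, τ.card = k + 1 → T τ →
      t' * ((k + 2) * p τ) ≤ ∑ u ∈ τᶜ, if Q (insert u τ) then p (insert u τ) else 0)
    (hskel : ∑ v ∈ σᶜ, ∑ u ∈ (insert v σ)ᶜ,
        (if T (insert v σ) ∧ T (insert u σ) then p (insert u (insert v σ)) else 0) ≤
      (k + 2) * s * ∑ v ∈ σᶜ, if T (insert v σ) then p (insert v σ) else 0) :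
    (k + 2) * (t' - s) * (∑ v ∈ σᶜ, if T (insert v σ) then p (insert v σ) else 0) ≤
      ∑ v ∈ σᶜ, ∑ u ∈ (insert v σ)ᶜ,
        if T (insert v σ) ∧ Q (insert u (insert v σ)) ∧ ¬ T (insert u σ) then
          p (insert u (insert v σ)) else 0 := by
  have h1 : (k + 2) * t' * (∑ v ∈ σᶜ, if T (insert v σ) then p (insert v σ) else 0) ≤
      ∑ v ∈ σᶜ, ∑ u ∈ (insert v σ)ᶜ,
        if T (insert v σ) ∧ Q (insert u (insert v σ)) then
          p (insert u (insert v σ)) else 0 := by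
    rw [mul_sum]
    refine sum_le_sum fun v hv => ?_
    by_cases h : T (insert v σ)
    · simp only [h, if_true, true_and]
      have := hQ (insert v σ) (by rw [card_insert_of_notMem (mem_compl.1 hv), hσ]) h
      linarith
    · simp [h]
  have h2 : ∑ v ∈ σᶜ, ∑ u ∈ (insert v σ)ᶜ,
        (if T (insert v σ) ∧ Q (insert u (insert v σ)) then
          p (insert u (insert v σ)) else 0) ≤
      ∑ v ∈ σᶜ, ∑ u ∈ (insert v σ)ᶜ,
        (if T (insert v σ) ∧ T (insert u σ) then p (insert u (insert v σ)) else 0) +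
      ∑ v ∈ σᶜ, ∑ u ∈ (insert v σ)ᶜ,
        if T (insert v σ) ∧ Q (insert u (insert v σ)) ∧ ¬ T (insert u σ) then
          p (insert u (insert v σ)) else 0 := by
    rw [← sum_add_distrib]
    refine sum_le_sum fun v _ => ?_
    rw [← sum_add_distrib]
    refine sum_le_sum fun u _ => ?_
    have := hp (insert u (insert v σ))
    by_cases a : T (insert v σ) <;> by_cases b : T (insert u σ) <;>
      by_cases c : Q (insert u (insert v σ)) <;> simp [a, b, c, this]
  linarith

/-- Exits from `T` at one level force exits one level higher: the intermediate faces
`σ ∪ {v} ∈ T` and `σ ∪ {u} ∉ T` of `σ ∪ {v, u} ∈ T` are exchangeable. -/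
lemma exitWeight_step {p : Finset V → ℝ} (hp : ∀ σ, 0 ≤ p σ) {T : Finset V → Prop} {k : ℕ}
    {t' s : ℝ}
    (hT : ∀ τ, τ.card = k + 1 → T τ →
      t' * ((k + 2) * p τ) ≤ ∑ u ∈ τᶜ, if T (insert u τ) then p (insert u τ) else 0)
    (hskel : ∀ σ, σ.card = k → ¬ T σ → ∑ v ∈ σᶜ, ∑ u ∈ (insert v σ)ᶜ,
        (if T (insert v σ) ∧ T (insert u σ) then p (insert u (insert v σ)) else 0) ≤
      (k + 2) * s * ∑ v ∈ σᶜ, if T (insert v σ) then p (insert v σ) else 0) :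
    (k + 2) * (t' - s) * exitWeight p T k ≤ (k + 1) * exitWeight p T (k + 1) := by
  have h1 : (k + 2) * (t' - s) * exitWeight p T k ≤
      ∑ σ ∈ powersetCard k univ, ∑ u ∈ σᶜ, ∑ v ∈ (insert u σ)ᶜ,
        if T (insert v (insert u σ)) ∧ ¬ T (insert u σ) then
          p (insert v (insert u σ)) else 0 := by
    rw [exitWeight, mul_sum]
    refine sum_le_sum fun σ hσ => ?_
    by_cases h : T σ
    · rw [if_pos h, mul_zero]
      exact sum_nonneg fun _ _ => sum_nonneg fun _ _ => sum_nonneg_ite hp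
    · rw [if_neg h]
      have hc := (mem_powersetCard.1 hσ).2
      refine (local_step hp hc hT (hskel σ hc h)).trans ?_
      rw [sum_pair_swap]
      refine sum_le_sum fun u _ => sum_le_sum fun v _ => ?_
      rw [Finset.insert_comm]
      have := hp (insert v (insert u σ))
      by_cases a : T (insert v σ) <;> by_cases b : T (insert u σ) <;>
        by_cases c : T (insert v (insert u σ)) <;> simp [a, b, c, this]
  refine h1.trans (le_of_eq ?_)
  rw [sum_insert_eq_mul k (fun ρ => ∑ v ∈ ρᶜ,
    if T (insert v ρ) ∧ ¬ T ρ then p (insert v ρ) else 0), exitWeight]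
  congr 1
  refine sum_congr rfl fun ρ _ => ?_
  by_cases h : T ρ <;> simp [h]

/-- Exits from `T` just below the top level produce sets with facets both in `T` and outside
`T`. -/
lemma exitWeight_le_psi {p : Finset V → ℝ} (hp : ∀ σ, 0 ≤ p σ) {T : Finset V → Prop} {k : ℕ}
    {s : ℝ}
    (hsum : ∀ σ : Finset V, σ.card = k + 1 → ∑ v ∈ σᶜ, p (insert v σ) = (k + 2) * p σ)
    (hskel : ∀ σ, σ.card = k → ¬ T σ → ∑ v ∈ σᶜ, ∑ u ∈ (insert v σ)ᶜ,
        (if T (insert v σ) ∧ T (insert u σ) then p (insert u (insert v σ)) else 0) ≤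
      (k + 2) * s * ∑ v ∈ σᶜ, if T (insert v σ) then p (insert v σ) else 0) :
    (1 - s) * exitWeight p T k ≤ (k + 1) * ∑ τ ∈ powersetCard (k + 2) univ,
      if (∃ σ ⊆ τ, σ.card = k + 1 ∧ T σ) ∧ ∃ σ ⊆ τ, σ.card = k + 1 ∧ ¬ T σ then p τ else 0 := by
  set g : Finset V → ℝ := fun τ =>
    if (∃ σ ⊆ τ, σ.card = k + 1 ∧ T σ) ∧ ∃ σ ⊆ τ, σ.card = k + 1 ∧ ¬ T σ then p τ else 0
    with hg
  have h1 : (k + 2) * (1 - s) * exitWeight p T k ≤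
      ∑ σ ∈ powersetCard k univ, ∑ v ∈ σᶜ, ∑ u ∈ (insert v σ)ᶜ, g (insert u (insert v σ)) := by
    rw [exitWeight, mul_sum]
    refine sum_le_sum fun σ hσ => ?_
    by_cases h : T σ
    · rw [if_pos h, mul_zero]
      exact sum_nonneg fun _ _ => sum_nonneg fun _ _ => sum_nonneg_ite hp
    · rw [if_neg h]
      have hc := (mem_powersetCard.1 hσ).2
      refine (local_step (Q := fun _ => True) hp hc
        (fun τ hτ _ => by simp [hsum τ hτ]) (hskel σ hc h)).trans ?_
      refine sum_le_sum fun v hv => sum_le_sum fun u hu => ?_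
      split_ifs with a
      · simp only [mem_compl, mem_insert, not_or] at hv hu
        refine le_of_eq (if_pos ⟨⟨insert v σ, subset_insert _ _, ?_, a.1⟩,
          ⟨insert u σ, insert_subset_insert _ (subset_insert _ _), ?_, a.2.2⟩⟩).symm
        · rw [card_insert_of_notMem hv, hc]
        · rw [card_insert_of_notMem hu.2, hc]
      · exact sum_nonneg_ite hp
  rw [sum_insert_eq_mul k (fun ρ => ∑ u ∈ ρᶜ, g (insert u ρ)),
    sum_insert_eq_mul (k + 1) g] at h1
  refine le_of_mul_le_mul_left (a := (k : ℝ) + 2) ?_ (by positivity)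
  push_cast at h1
  linarith

/-- Iterating the level inequalities: if no chain reaches `T` at cardinality `0`, then the
weight of `T` is controlled by its exits at the top level. -/
lemma pow_mul_level_le {q C : ℕ → ℝ} {n : ℕ} {β : ℝ} (hβ0 : 0 ≤ β) (hβ1 : β ≤ 1)
    (h0 : q 0 = 0) (hC : ∀ k, 0 ≤ C k)
    (hq : ∀ k < n, ((k : ℝ) + 1) * q (k + 1) ≤ C k + (k + 1) * q k)
    (hstep : ∀ k, k + 1 < n → ((k : ℝ) + 2) * β * C k ≤ (k + 1) * C (k + 1)) :
    ∀ k < n, β ^ k * q (k + 1) ≤ C k := by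
  intro k
  induction k with
  | zero =>
    intro hk
    have := hq 0 hk
    simp [h0] at this ⊢
    exact this
  | succ k ih =>
    intro hk
    have ih := ih (by omega)
    have a := hq (k + 1) hk
    have b := hstep k hk
    push_cast at a
    have hp1 : β ^ (k + 1) ≤ 1 := pow_le_one₀ hβ0 hβ1
    have hp0 : 0 ≤ β ^ (k + 1) := pow_nonneg hβ0 _
    have a' := mul_le_mul_of_nonneg_left a hp0
    have e1 : β ^ (k + 1) * C (k + 1) ≤ C (k + 1) := by nlinarith [hC (k + 1)]
    have e2 : β ^ (k + 1) * q (k + 1) ≤ β * C k := by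
      rw [pow_succ']
      nlinarith
    have hk0 : (0 : ℝ) ≤ k := Nat.cast_nonneg k
    have e3 : ((k : ℝ) + 2) * (β ^ (k + 1) * q (k + 1)) ≤ (k + 1) * C (k + 1) :=
      (mul_le_mul_of_nonneg_left e2 (by positivity)).trans (by linarith)
    refine le_of_mul_le_mul_left (a := (k : ℝ) + 2) ?_ (by positivity)
    linarith

end Core

/-! ### The descending chain of a simplicial complex -/

/-- The passage from norms in a link to chain probabilities: `z₀, z₁, z₂` are the total
degrees at three consecutive levels, `D` the degree of the base face. -/
lemma skeleton_arith {k r t α a E D z₀ z₁ z₂ : ℝ} (hr : 0 ≤ r) (ha : 0 ≤ a)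
    (hD : 0 < D) (h0 : 0 < z₀) (h1 : 0 < z₁) (h2 : 0 < z₂)
    (r1 : (k + 1) * z₁ = (r + 2) * z₀) (r2 : (k + 2) * z₂ = (r + 1) * z₁)
    (hthin : a / z₁ ≤ t * ((k + 1) * (D / z₀)))
    (hs : E / ((r + 1) * ((r + 2) * D)) ≤
      a / ((r + 2) * D) * (a / ((r + 2) * D) + α)) :
    E / z₂ ≤ (k + 2) * (t + α) * (a / z₁) := by
  have hst : a / ((r + 2) * D) ≤ t := by
    rw [div_le_iff₀ (by positivity)]
    rw [div_le_iff₀ h1] at hthin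
    refine hthin.trans (le_of_eq ?_)
    calc t * ((k + 1) * (D / z₀)) * z₁ = t * (D / z₀) * ((k + 1) * z₁) := by ring
      _ = t * ((r + 2) * D) * (z₀ / z₀) := by rw [r1]; ring
      _ = _ := by rw [div_self h0.ne', mul_one]
  have hE : E ≤ (r + 1) * (t + α) * a := by
    have h := hs.trans (mul_le_mul_of_nonneg_left (show _ ≤ t + α by linarith)
      (show 0 ≤ a / ((r + 2) * D) by positivity))
    rw [div_le_iff₀ (by positivity)] at h
    refine h.trans (le_of_eq ?_)
    calc a / ((r + 2) * D) * (t + α) * ((r + 1) * ((r + 2) * D))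
        = (r + 1) * (t + α) * a * (((r + 2) * D) / ((r + 2) * D)) := by ring
      _ = _ := by rw [div_self (by positivity), mul_one]
  rw [div_le_iff₀ h2]
  refine hE.trans (le_of_eq ?_)
  calc (r + 1) * (t + α) * a = (t + α) * a * (((r + 1) * z₁) / z₁) := by
        rw [mul_div_assoc, div_self h1.ne']; ring
    _ = _ := by rw [← r2]; ring

section Complex

variable {V : Type} [DecidableEq V] [Fintype V] {d : ℕ} (X : SC V d)

namespace SC

/-- The total degree of the faces of cardinality `k`. -/
noncomputable def totalDeg (k : ℕ) : ℝ := ∑ σ ∈ powersetCard k univ, (X.deg σ : ℝ)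

/-- The probability that the random descending chain started at a uniform top face passes
through `σ`; it is `0` when `σ` is not a face. -/
noncomputable def prob (σ : Finset V) : ℝ := X.deg σ / X.totalDeg σ.card

lemma mem_fc {k : ℕ} {σ : Finset V} : σ ∈ X.fc k ↔ σ ∈ X.faces ∧ σ.card = k := by
  simp [fc]

lemma deg_pos_iff {σ : Finset V} : 0 < X.deg σ ↔ σ ∈ X.faces := by
  rw [deg, card_pos]
  constructor
  · rintro ⟨τ, hτ⟩
    rw [mem_filter, mem_fc] at hτ
    exact X.down_closed τ hτ.1.1 σ hτ.2
  · intro h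
    obtain ⟨τ, h1, h2, h3⟩ := X.pure σ h
    exact ⟨τ, mem_filter.2 ⟨(X.mem_fc).2 ⟨h1, h3⟩, h2⟩⟩

lemma deg_eq_zero {σ : Finset V} (h : σ ∉ X.faces) : (X.deg σ : ℝ) = 0 := by
  have := mt X.deg_pos_iff.1 h
  simpa using this

/-- A sum of quantities vanishing off the faces, extended from the faces to all sets. -/
lemma sum_fc (k : ℕ) (g : Finset V → ℝ) (hg : ∀ σ, σ ∉ X.faces → g σ = 0) :
    ∑ σ ∈ X.fc k, g σ = ∑ σ ∈ powersetCard k univ, g σ := by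
  refine sum_subset (fun σ hσ => ?_) fun σ hσ h => hg σ fun hf => h ?_
  · exact mem_powersetCard.2 ⟨subset_univ _, ((X.mem_fc).1 hσ).2⟩
  · exact (X.mem_fc).2 ⟨hf, (mem_powersetCard.1 hσ).2⟩

lemma sum_deg_insert {σ : Finset V} {r : ℕ} (h : σ.card + r = d + 1) :
    ∑ v ∈ σᶜ, (X.deg (insert v σ) : ℝ) = r * X.deg σ := by
  have e : ∀ ρ : Finset V, (X.deg ρ : ℝ) = ∑ τ ∈ X.fc (d + 1), if ρ ⊆ τ then 1 else 0 := by
    intro ρ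
    rw [deg, card_filter]
    push_cast
    rfl
  simp_rw [e]
  rw [sum_comm, mul_sum]
  refine sum_congr rfl fun τ hτ => ?_
  have hc := ((X.mem_fc).1 hτ).2
  by_cases hs : σ ⊆ τ
  · rw [if_pos hs, ← sum_filter, sum_const, nsmul_eq_mul, mul_one, mul_one]
    have : σᶜ.filter (fun v => insert v σ ⊆ τ) = τ \ σ := by
      ext v
      simp only [mem_filter, mem_sdiff, mem_compl, insert_subset_iff]
      tauto
    rw [this, card_sdiff_of_subset hs, hc, ← h]
    simp
  · rw [if_neg hs, mul_zero]
    exact sum_eq_zero fun v _ => if_neg fun h' => hs ((subset_insert _ _).trans h')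

lemma totalDeg_succ {k r : ℕ} (h : k + r = d + 1) :
    (k + 1) * X.totalDeg (k + 1) = r * X.totalDeg k := by
  rw [totalDeg, ← sum_insert_eq_mul k (fun σ => (X.deg σ : ℝ)), totalDeg, mul_sum]
  refine sum_congr rfl fun σ hσ => X.sum_deg_insert ?_
  rw [(mem_powersetCard.1 hσ).2, h]

lemma totalDeg_pos {k : ℕ} (h : k ≤ d + 1) : 0 < X.totalDeg k := by
  obtain ⟨τ, h1, -, h3⟩ := X.pure ∅ X.empty_mem
  obtain ⟨σ, hs, hc⟩ := exists_subset_card_eq (h3 ▸ h : k ≤ τ.card)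
  refine sum_pos' (fun _ _ => Nat.cast_nonneg _) ⟨σ, mem_powersetCard.2 ⟨subset_univ _, hc⟩, ?_⟩
  exact_mod_cast X.deg_pos_iff.2 (X.down_closed τ h1 σ hs)

lemma prob_nonneg (σ : Finset V) : 0 ≤ X.prob σ :=
  div_nonneg (Nat.cast_nonneg _) (sum_nonneg fun _ _ => Nat.cast_nonneg _)

lemma prob_empty : X.prob ∅ = 1 := by
  have h := X.totalDeg_pos (k := 0) (by omega)
  rw [totalDeg, powersetCard_zero, sum_singleton] at h
  rw [prob, card_empty, totalDeg, powersetCard_zero, sum_singleton, div_self (ne_of_gt h)]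

/-- One step of the random chain. -/
lemma sum_prob_insert {σ : Finset V} {k : ℕ} (hk : σ.card = k) (h : k ≤ d) :
    ∑ v ∈ σᶜ, X.prob (insert v σ) = (k + 1) * X.prob σ := by
  have e : ∀ v ∈ σᶜ, X.prob (insert v σ) = X.deg (insert v σ) / X.totalDeg (k + 1) := by
    intro v hv
    rw [prob, card_insert_of_notMem (mem_compl.1 hv), hk]
  obtain ⟨r, hr⟩ := Nat.exists_eq_add_of_le (show k ≤ d + 1 by omega)
  rw [sum_congr rfl e, ← sum_div, X.sum_deg_insert (r := r) (by omega), prob, hk]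
  have h0 := X.totalDeg_pos (k := k) (by omega)
  have h1 := X.totalDeg_pos (k := k + 1) (by omega)
  have h2 := X.totalDeg_succ (k := k) (r := r) (by omega)
  field_simp
  linear_combination (-(X.deg σ : ℝ)) * h2

lemma norm_eq_levelWeight {k : ℕ} {W : Finset (Finset V)} (T : Finset V → Prop)
    (hT : ∀ σ : Finset V, σ.card = k → (T σ ↔ σ ∈ W)) :
    X.norm k W = levelWeight X.prob T k := by
  have h1 : ∑ σ ∈ X.fc k, (X.deg σ : ℝ) = X.totalDeg k :=
    X.sum_fc k (fun σ => (X.deg σ : ℝ)) fun σ => X.deg_eq_zero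
  have h2 := X.sum_fc k (fun σ => if σ ∈ W then (X.deg σ : ℝ) else 0)
    fun σ hσ => by simp [X.deg_eq_zero hσ]
  rw [norm, h1, sum_filter, h2, levelWeight, sum_div]
  refine sum_congr rfl fun σ hσ => ?_
  have hc := (mem_powersetCard.1 hσ).2
  rw [prob, hc]
  by_cases h : σ ∈ W
  · rw [if_pos h, if_pos ((hT σ hc).2 h)]
  · rw [if_neg h, if_neg (mt (hT σ hc).1 h), zero_div]

lemma norm_psi (k : ℕ) (W : Finset (Finset V)) (T : Finset V → Prop)
    (hT : ∀ σ : Finset V, σ.card = k → (T σ ↔ σ ∈ W)) :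
    X.norm (k + 1) (X.psi k W) = ∑ τ ∈ powersetCard (k + 1) univ,
      if (∃ σ ⊆ τ, σ.card = k ∧ T σ) ∧ ∃ σ ⊆ τ, σ.card = k ∧ ¬ T σ then X.prob τ else 0 := by
  rw [X.norm_eq_levelWeight (fun τ => τ ∈ X.psi k W) fun _ _ => Iff.rfl, levelWeight]
  refine sum_congr rfl fun τ hτ => ?_
  have hc := (mem_powersetCard.1 hτ).2
  have e : ((∃ σ ⊆ τ, σ.card = k ∧ T σ) ∧ ∃ σ ⊆ τ, σ.card = k ∧ ¬ T σ) ↔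
      ((∃ σ ⊆ τ, σ.card = k ∧ σ ∈ W) ∧ ∃ σ ⊆ τ, σ.card = k ∧ σ ∉ W) := by
    refine and_congr (exists_congr fun σ => and_congr_right fun _ => and_congr_right fun h => ?_)
      (exists_congr fun σ => and_congr_right fun _ => and_congr_right fun h => ?_)
    · exact hT σ h
    · exact not_congr (hT σ h)
  by_cases hf : τ ∈ X.faces
  · congr 1
    rw [eq_iff_iff, e, psi, mem_filter, mem_fc]
    simp only [hf, hc, true_and]
  · have : X.prob τ = 0 := by rw [prob, X.deg_eq_zero hf, zero_div]
    simp [this]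

/-- The vertex norm in a link as a sum over added vertices. -/
lemma linkSubsetNorm_one {σ : Finset V} {r : ℕ} (h : σ.card + r = d + 1) (S : Finset V) :
    X.linkSubsetNorm σ 1 S =
      (∑ v ∈ σᶜ, if v ∈ S then (X.deg (insert v σ) : ℝ) else 0) / (r * X.deg σ) := by
  have e1 := X.sum_fc (σ.card + 1)
    (fun ρ => if σ ⊆ ρ then (if ρ \ σ ⊆ S then (X.deg ρ : ℝ) else 0) else 0)
    fun ρ hρ => by simp [X.deg_eq_zero hρ]
  have e2 := X.sum_fc (σ.card + 1) (fun ρ => if σ ⊆ ρ then (X.deg ρ : ℝ) else 0)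
    fun ρ hρ => by simp [X.deg_eq_zero hρ]
  rw [linkSubsetNorm, sum_filter, sum_filter, e2, sum_superset_one σ fun ρ => (X.deg ρ : ℝ),
    X.sum_deg_insert h]
  simp_rw [ite_and]
  rw [e1, sum_superset_one σ]
  congr 1
  refine sum_congr rfl fun v hv => ?_
  congr 1
  rw [insert_sdiff_of_notMem _ (mem_compl.1 hv), sdiff_self]
  simp

/-- The edge norm in a link as a sum over ordered pairs of added vertices. -/
lemma linkSubsetNorm_two {σ : Finset V} {r : ℕ} (h : σ.card + (r + 1) = d + 1)
    (S : Finset V) :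
    X.linkSubsetNorm σ 2 S =
      (∑ v ∈ σᶜ, ∑ u ∈ (insert v σ)ᶜ,
        if v ∈ S ∧ u ∈ S then (X.deg (insert u (insert v σ)) : ℝ) else 0) /
        (r * ((r + 1) * X.deg σ)) := by
  have e1 := X.sum_fc (σ.card + 2)
    (fun ρ => if σ ⊆ ρ then (if ρ \ σ ⊆ S then (X.deg ρ : ℝ) else 0) else 0)
    fun ρ hρ => by simp [X.deg_eq_zero hρ]
  have e2 := X.sum_fc (σ.card + 2) (fun ρ => if σ ⊆ ρ then (X.deg ρ : ℝ) else 0)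
    fun ρ hρ => by simp [X.deg_eq_zero hρ]
  have e3 : ∑ v ∈ σᶜ, ∑ u ∈ (insert v σ)ᶜ, (X.deg (insert u (insert v σ)) : ℝ) =
      r * ((r + 1) * X.deg σ) := by
    rw [sum_congr rfl fun v hv => X.sum_deg_insert (σ := insert v σ) (r := r) (by
      rw [card_insert_of_notMem (mem_compl.1 hv)]; omega), ← mul_sum, X.sum_deg_insert h]
    push_cast
    rfl
  rw [linkSubsetNorm, sum_filter, sum_filter, e2]
  simp_rw [ite_and]
  rw [e1, ← mul_div_mul_left _ _ (two_ne_zero' ℝ), sum_superset_two, sum_superset_two, e3]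
  congr 1
  refine sum_congr rfl fun v hv => sum_congr rfl fun u hu => ?_
  simp only [mem_compl, mem_insert, not_or] at hv hu
  rw [insert_sdiff_of_notMem _ hu.2, insert_sdiff_of_notMem _ hv, sdiff_self, ← ite_and]
  congr 1
  simp only [insert_subset_iff, eq_iff_iff]
  simp [and_comm]

/-- The skeleton bound at a face whose link meets `T` in proportion at most `t`. -/
lemma skeleton_thin {α : ℝ} (hX : X.IsSkeletonExpander α) {T : Finset V → Prop}
    {σ : Finset V} {k : ℕ} {t : ℝ} (hk : σ.card = k) (hkd : k < d) (hσ : σ ∈ X.faces)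
    (hthin : ∑ v ∈ σᶜ, (if T (insert v σ) then X.prob (insert v σ) else 0) ≤
      t * ((k + 1) * X.prob σ)) :
    ∑ v ∈ σᶜ, ∑ u ∈ (insert v σ)ᶜ,
        (if T (insert v σ) ∧ T (insert u σ) then X.prob (insert u (insert v σ)) else 0) ≤
      (k + 2) * (t + α) * ∑ v ∈ σᶜ, if T (insert v σ) then X.prob (insert v σ) else 0 := by
  obtain ⟨r, hr⟩ := Nat.exists_eq_add_of_lt hkd
  have hD : 0 < (X.deg σ : ℝ) := by exact_mod_cast X.deg_pos_iff.2 hσ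
  have z0 := X.totalDeg_pos (k := k) (by omega)
  have z1 := X.totalDeg_pos (k := k + 1) (by omega)
  have z2 := X.totalDeg_pos (k := k + 2) (by omega)
  have r1 := X.totalDeg_succ (k := k) (r := r + 2) (by omega)
  have r2 := X.totalDeg_succ (k := k + 1) (r := r + 1) (by omega)
  set a : ℝ := ∑ v ∈ σᶜ, if T (insert v σ) then (X.deg (insert v σ) : ℝ) else 0 with ha
  set E : ℝ := ∑ v ∈ σᶜ, ∑ u ∈ (insert v σ)ᶜ,
    if T (insert v σ) ∧ T (insert u σ) then (X.deg (insert u (insert v σ)) : ℝ) else 0 with hE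
  have ha0 : 0 ≤ a := sum_nonneg fun v _ => by split_ifs <;> positivity
  have hpa : ∑ v ∈ σᶜ, (if T (insert v σ) then X.prob (insert v σ) else 0) =
      a / X.totalDeg (k + 1) := by
    rw [ha, sum_div]
    refine sum_congr rfl fun v hv => ?_
    rw [prob, card_insert_of_notMem (mem_compl.1 hv), hk]
    split_ifs <;> simp
  have hpE : ∑ v ∈ σᶜ, ∑ u ∈ (insert v σ)ᶜ,
        (if T (insert v σ) ∧ T (insert u σ) then X.prob (insert u (insert v σ)) else 0) =
      E / X.totalDeg (k + 2) := by
    rw [hE, sum_div]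
    refine sum_congr rfl fun v hv => ?_
    rw [sum_div]
    refine sum_congr rfl fun u hu => ?_
    rw [prob, card_insert_of_notMem (mem_compl.1 hu), card_insert_of_notMem (mem_compl.1 hv), hk]
    split_ifs <;> simp
  have hs := hX σ hσ (univ.filter fun v => T (insert v σ))
  rw [X.linkSubsetNorm_one (r := r + 2) (by omega),
    X.linkSubsetNorm_two (r := r + 1) (by omega)] at hs
  simp only [mem_filter, mem_univ, true_and] at hs
  rw [← ha, ← hE] at hs
  rw [hpa, prob, hk] at hthin
  rw [hpa, hpE]
  push_cast at hs r1 r2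
  refine skeleton_arith (r := r) (by positivity) ha0 hD z0 z1 z2 ?_ ?_ hthin ?_
  · linear_combination r1
  · linear_combination r2
  · convert hs using 2
    ring

end SC

end Complex

/-! ### Fat faces -/

section Fat

variable {V : Type} [DecidableEq V] [Fintype V]

/-- Fatness `m` levels below the top: at depth `0` membership in `W`, and at depth `m + 1` the
fat extensions carry at least an `η ^ 2 ^ m` fraction of the weight. At positive depth the
condition holds trivially at sets of zero weight, so for the weight `SC.prob` of a complex a
set that is not fat is a face. -/
def fatAt (p : Finset V → ℝ) (W : Finset (Finset V)) (η : ℝ) : ℕ → Finset V → Prop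
  | 0, σ => σ ∈ W
  | m + 1, σ => η ^ 2 ^ m * ((σ.card + 1) * p σ) ≤
      ∑ v ∈ σᶜ, if fatAt p W η m (insert v σ) then p (insert v σ) else 0

/-- Fatness with respect to a family `W` of sets of cardinality `n`, as a single predicate on
sets of cardinality at most `n`. -/
def isFat (p : Finset V → ℝ) (W : Finset (Finset V)) (η : ℝ) (n : ℕ) (σ : Finset V) : Prop :=
  fatAt p W η (n - σ.card) σ

lemma isFat_top (p : Finset V → ℝ) (W : Finset (Finset V)) (η : ℝ) {n : ℕ} {σ : Finset V}
    (h : σ.card = n) : isFat p W η n σ ↔ σ ∈ W := by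
  rw [isFat, h, Nat.sub_self, fatAt]

lemma isFat_iff (p : Finset V → ℝ) (W : Finset (Finset V)) (η : ℝ) {n k m : ℕ}
    {σ : Finset V} (hk : σ.card = k) (hm : k + m + 1 = n) :
    isFat p W η n σ ↔ η ^ 2 ^ m * ((k + 1) * p σ) ≤
      ∑ v ∈ σᶜ, if isFat p W η n (insert v σ) then p (insert v σ) else 0 := by
  rw [isFat, show n - σ.card = m + 1 by omega, fatAt, hk]
  have e : ∀ v ∈ σᶜ, (if fatAt p W η m (insert v σ) then p (insert v σ) else 0) =
      if isFat p W η n (insert v σ) then p (insert v σ) else 0 := by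
    intro v hv
    rw [isFat, card_insert_of_notMem (mem_compl.1 hv), show n - (σ.card + 1) = m by omega]
  rw [sum_congr rfl e]

end Fat

/-! ### Numerical bounds on the thresholds -/

section Numeric

/-- The worst case of `η ^ 2 ^ m - η ^ 2 ^ (m + 1)` over the levels: with `s = η ^ 2 ^ (d - 1)`
one has `s = 1 / √2`, and `η ^ 2 ^ m * η ≥ η ^ 2 ^ (m + 1) ≥ s`. -/
lemma gap_le {η : ℝ} (h0 : 0 < η) (h1 : η < 1) {d m : ℕ} (hm : m + 2 ≤ d) :
    (1 - η) / η * η ^ 2 ^ (d - 1) ≤ η ^ 2 ^ m - η ^ 2 ^ (m + 1) := by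
  have hs : η ^ 2 ^ (d - 1) ≤ η ^ 2 ^ (m + 1) :=
    pow_le_pow_of_le_one h0.le h1.le (Nat.pow_le_pow_right (by norm_num) (by omega))
  have hx : η ^ 2 ^ m ≤ η := by
    simpa using pow_le_pow_of_le_one h0.le h1.le (Nat.one_le_two_pow (n := m))
  have hx0 : 0 < η ^ 2 ^ m := by positivity
  rw [pow_succ 2 m, pow_mul] at hs ⊢
  set x := η ^ 2 ^ m
  have hxs : η ^ 2 ^ (d - 1) ≤ x * η := by nlinarith
  calc (1 - η) / η * η ^ 2 ^ (d - 1) ≤ (1 - η) / η * (x * η) :=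
        mul_le_mul_of_nonneg_left hxs (div_nonneg (by linarith) h0.le)
    _ = (1 - η) * x := by field_simp
    _ ≤ x - x ^ 2 := by nlinarith

lemma gap_le_top {η : ℝ} (h0 : 0 < η) (h1 : η < 1) (d : ℕ) :
    (1 - η) / η * η ^ 2 ^ (d - 1) ≤ 1 - η := by
  have hs : η ^ 2 ^ (d - 1) ≤ η := by
    simpa using pow_le_pow_of_le_one h0.le h1.le (Nat.one_le_two_pow (n := d - 1))
  calc (1 - η) / η * η ^ 2 ^ (d - 1) ≤ (1 - η) / η * η :=
        mul_le_mul_of_nonneg_left hs (div_nonneg (by linarith) h0.le)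
    _ = 1 - η := by field_simp

end Numeric

/-! ### Colorful expansion -/

section Main

variable {V : Type} [DecidableEq V] [Fintype V] {d : ℕ}

/-- Colorful expansion of a single cochain, in terms of the fatness constant `η`. -/
lemma pow_mul_norm_le {X : SC V d} {α β η : ℝ} (hX : X.IsSkeletonExpander α)
    (hη0 : 0 < η) (hη1 : η < 1) (hη : η ^ 2 ^ d = 1 / 2) (hα : 0 ≤ α) (hβ : 0 < β)
    (hβα : β + α = (1 - η) / η * η ^ 2 ^ (d - 1))
    {i : ℕ} (hi : i < d) {W : Finset (Finset V)} (hW : X.norm (i + 1) W ≤ 1 / 2) :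
    β ^ (i + 1) * X.norm (i + 1) W ≤ (i + 1) * X.norm (i + 2) (X.psi (i + 1) W) := by
  set T := isFat X.prob W η (i + 1) with hTdef
  have hTtop : ∀ σ : Finset V, σ.card = i + 1 → (T σ ↔ σ ∈ W) := fun σ h => isFat_top _ _ _ h
  rw [X.norm_psi (i + 1) W T hTtop]
  rw [X.norm_eq_levelWeight T hTtop] at hW ⊢
  have hp := X.prob_nonneg
  have hfat : ∀ k m, k + m = i → ∀ σ : Finset V, σ.card = k → (T σ ↔
      η ^ 2 ^ m * ((k + 1) * X.prob σ) ≤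
        ∑ v ∈ σᶜ, if T (insert v σ) then X.prob (insert v σ) else 0) :=
    fun k m h σ hk => isFat_iff _ _ _ hk (by omega)
  have hskel : ∀ k m, k + m = i → ∀ σ : Finset V, σ.card = k → ¬ T σ →
      ∑ v ∈ σᶜ, ∑ u ∈ (insert v σ)ᶜ,
        (if T (insert v σ) ∧ T (insert u σ) then X.prob (insert u (insert v σ)) else 0) ≤
      (k + 2) * (η ^ 2 ^ m + α) *
        ∑ v ∈ σᶜ, if T (insert v σ) then X.prob (insert v σ) else 0 := by
    intro k m h σ hk hσ
    rw [hfat k m h σ hk, not_le] at hσ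
    refine X.skeleton_thin hX hk (by omega) ?_ hσ.le
    -- the thinness inequality is strict, so `σ` has positive weight
    by_contra hf
    rw [SC.prob, X.deg_eq_zero hf, zero_div, mul_zero, mul_zero] at hσ
    exact absurd hσ (not_lt.2 (sum_nonneg fun _ _ => sum_nonneg_ite hp))
  -- weight of fat faces grows from level to level at the rate prescribed by the thresholds
  have hgrow : ∀ k m, k + m = i →
      η ^ 2 ^ m * levelWeight X.prob T k ≤ levelWeight X.prob T (k + 1) := fun k m h =>
    mul_levelWeight_le hp fun σ hk hσ => (hfat k m h σ hk).1 hσ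
  have hzero : levelWeight X.prob T 0 = 0 := by
    rw [levelWeight, powersetCard_zero, sum_singleton]
    refine if_neg fun hT => ?_
    have hq : ∀ k m, k + m = i + 1 → η ^ 2 ^ (i + 1) ≤ levelWeight X.prob T k * η ^ 2 ^ m := by
      intro k
      induction k with
      | zero =>
        intro m hm
        rw [levelWeight, powersetCard_zero, sum_singleton, if_pos hT, X.prob_empty, one_mul,
          show m = i + 1 by omega]
      | succ k ih =>
        intro m hm
        refine (ih (m + 1) (by omega)).trans ?_
        have := mul_le_mul_of_nonneg_right (hgrow k m (by omega)) (pow_pos hη0 (2 ^ m)).le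
        rw [pow_succ 2 m, mul_two, pow_add]
        linarith
    have h1 := hq (i + 1) 0 rfl
    have h2 : η ^ 2 ^ d ≤ η ^ 2 ^ (i + 1) :=
      pow_le_pow_of_le_one hη0.le hη1.le (Nat.pow_le_pow_right (by norm_num) hi)
    rw [pow_zero, pow_one] at h1
    nlinarith
  have hβ1 : β ≤ 1 := by
    have := gap_le_top hη0 hη1 d
    linarith
  have hlevel := pow_mul_level_le (q := levelWeight X.prob T) (C := exitWeight X.prob T)
    (n := i + 1) hβ.le hβ1 hzero (exitWeight_nonneg hp T)
    (fun k hk => levelWeight_succ_le hp T fun σ hσ => X.sum_prob_insert hσ (by omega))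
    (fun k hk => by
      obtain ⟨m, hm⟩ := Nat.exists_eq_add_of_lt (show k < i by omega)
      have h := exitWeight_step hp (T := T) (k := k) (t' := η ^ 2 ^ m)
        (s := η ^ 2 ^ (m + 1) + α)
        (fun τ hτ hTτ => by
          have := (hfat (k + 1) m (by omega) τ hτ).1 hTτ
          push_cast at this
          linarith)
        (hskel k (m + 1) (by omega))
      have hg := gap_le hη0 hη1 (d := d) (m := m) (by omega)
      refine le_trans ?_ h
      exact mul_le_mul_of_nonneg_right
        (mul_le_mul_of_nonneg_left (by linarith) (by positivity)) (exitWeight_nonneg hp T k))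
    i (by omega)
  have htop := exitWeight_le_psi hp (T := T) (k := i) (s := η ^ 2 ^ 0 + α)
    (fun σ hσ => by
      have := X.sum_prob_insert hσ (by omega)
      push_cast at this
      linarith)
    (hskel i 0 rfl)
  refine le_trans ?_ htop
  have hg := gap_le_top hη0 hη1 d
  rw [pow_zero, pow_one]
  have hC := exitWeight_nonneg hp T i
  calc β ^ (i + 1) * levelWeight X.prob T (i + 1)
      = β * (β ^ i * levelWeight X.prob T (i + 1)) := by ring
    _ ≤ β * exitWeight X.prob T i := mul_le_mul_of_nonneg_left hlevel hβ.le
    _ ≤ _ := mul_le_mul_of_nonneg_right (by linarith) hC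

/-- The final comparison of constants. -/
lemma pow_div_le {β : ℝ} (h0 : 0 < β) (h1 : β ≤ 1) {i d : ℕ} (hi : i < d) :
    (β / (2 * d)) ^ d * (i + 1) ≤ β ^ (i + 1) := by
  have hd : (1 : ℝ) ≤ d := by exact_mod_cast (by omega : 1 ≤ d)
  have hid : (i : ℝ) + 1 ≤ d := by exact_mod_cast hi
  have a : (i : ℝ) + 1 ≤ (2 * (d : ℝ)) ^ d :=
    calc (i : ℝ) + 1 ≤ 2 * d := by linarith
      _ ≤ (2 * (d : ℝ)) ^ d := le_self_pow₀ (by linarith) (by omega)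
  have b : β ^ d ≤ β ^ (i + 1) := pow_le_pow_of_le_one h0.le h1 hi
  rw [div_pow, div_mul_eq_mul_div, div_le_iff₀ (by positivity)]
  exact mul_le_mul b a (by positivity) (by positivity)

end Main

/-- **Colorful expansion criterion.** If a pure `d`-dimensional simplicial complex `X` is an
`α`-skeleton expander with `0 < α < (2^(1/2^d) − 1)/√2`, then `X` is an `ε`-colorful
expander for `ε = ((2^(1/2^d) − 1 − √2 α)/(2√2 d))^d`. -/
theorem statement0 {V : Type} [DecidableEq V] [Fintype V] {d : ℕ} (X : SC V d)
    (α : ℝ) (hα0 : 0 < α)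
    (hα : α < ((2 : ℝ) ^ ((1 : ℝ) / 2 ^ d) - 1) / Real.sqrt 2)
    (hX : X.IsSkeletonExpander α) :
    X.IsColorfulExpander
      ((((2 : ℝ) ^ ((1 : ℝ) / 2 ^ d) - 1 - Real.sqrt 2 * α) /
          (2 * Real.sqrt 2 * (d : ℝ))) ^ d) := by
  intro i hi W _ hpos hhalf
  set y : ℝ := (2 : ℝ) ^ ((1 : ℝ) / 2 ^ d) with hy
  have hy1 : 1 < y := Real.one_lt_rpow (by norm_num) (by positivity)
  have hyd : y ^ 2 ^ d = 2 := by
    rw [hy, ← Real.rpow_natCast, ← Real.rpow_mul (by norm_num)]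
    push_cast
    rw [one_div, inv_mul_cancel₀ (by positivity), Real.rpow_one]
  have hy0 : 0 < y := by linarith
  have hsqrt : 0 < Real.sqrt 2 := by positivity
  have hsq : y ^ 2 ^ (d - 1) = Real.sqrt 2 := by
    symm
    rw [Real.sqrt_eq_iff_mul_self_eq (by norm_num) (by positivity), ← pow_add, ← mul_two,
      ← pow_succ, show d - 1 + 1 = d by omega, hyd]
  have hη0 : 0 < y⁻¹ := inv_pos.2 hy0
  have hη1 : y⁻¹ < 1 := inv_lt_one_of_one_lt₀ hy1
  set β : ℝ := (y - 1 - Real.sqrt 2 * α) / Real.sqrt 2 with hβdef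
  have hβα : β + α = (1 - y⁻¹) / y⁻¹ * y⁻¹ ^ 2 ^ (d - 1) := by
    rw [inv_pow, hsq, hβdef]
    field_simp
    ring
  have hβ : 0 < β := by
    refine div_pos ?_ hsqrt
    rw [lt_div_iff₀ hsqrt] at hα
    linarith
  have hβ1 : β ≤ 1 := by
    have := gap_le_top hη0 hη1 d
    linarith
  have key := pow_mul_norm_le hX hη0 hη1 (by rw [inv_pow, hyd]; norm_num) hα0.le hβ hβα hi hhalf
  rw [show (y - 1 - Real.sqrt 2 * α) / (2 * Real.sqrt 2 * (d : ℝ)) = β / (2 * d) by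
    rw [hβdef, div_div]; congr 1; ring, le_div_iff₀ hpos]
  have hc := mul_le_mul_of_nonneg_right (pow_div_le hβ hβ1 hi) hpos.le
  refine le_of_mul_le_mul_left (a := (i : ℝ) + 1) ?_ (by positivity)
  linarith
end

section
/- Let X be a pure d-dimensional α-skeleton expander, 0 ≤ i < d, 0 < η < 1 a fatness constant. Then for every i-cochain W and every 0 ≤ j ≤ i, Pr[P_{i+1} ∈ F^{i+1}(W) and P_{j−1} ∉ S^{j−1}(W)] ≤ (η^(2^(i−j)) + α)·Pr[P_j ∈ S^j(W) and P_{j−1} ∉ S^{j−1}(W)] + Σ_{k=j+1}^{i} (k+1)(η^(2^(i−k)) + α)·Pr[P_k ∈ S^k(W) and P_{k−1} ∉ S^{k−1}(W)]. -/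
/-!
Follow the random chain `P_{i+1} ⊃ ⋯ ⊃ P_{j-1}` with `P_{i+1}` full and `P_{j-1}` not fat.
Between `P_{j-1}` and `P_{j+1}` there are two `j`-faces.  If both are fat, an event has occurred
which skeleton expansion in the link of `P_{j-1}` makes rare.  Otherwise `P_{j+1}` contains a non-fat
`j`-face, and the same dichotomy is applied to that face, which has codimension one in `P_{j+1}`,
inside `P_{j+2}`, and so on.  Since all `i`-faces of the full face `P_{i+1}` are fat, the
first alternative must hold at some level `j ≤ k ≤ i`.  At a level `k > j` the non-fat face is one of
the `k + 1` facets of `P_k`, and a union bound over them gives the factor `k + 1`.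
This pathwise bound is `FatChain.avg_nonmem_le_sum`.

The probability at level `k` is estimated in `FatChain.level_le`: conditionally on `P_{k-1} = ρ` not
fat, the vertices extending `ρ` to a fat face form a set `S` with `‖S‖_ρ < η^(2^(i-k))`, so
`‖E(S)‖_ρ ≤ (η^(2^(i-k)) + α) ‖S‖_ρ`.

The chain is never built as a random variable.  Every event used depends on members of the chain
through iterated uniform averages over subsets (`FatChain.avg`), averaged over the top faces
(`FatChain.ex`), and the tower property `FatChain.avg_avg` replaces the Markov property.
-/

open Finset

open scoped Classical

namespace FatChain

variable {V : Type} [DecidableEq V] [Fintype V] {d : ℕ}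

/-! ### Averages over the subsets of a fixed size -/

/-- The number of sets of size `|ρ| + m` between `ρ` and `T`. -/
theorem card_between (ρ T : Finset V) (h : ρ ⊆ T) (m : ℕ) :
    ((T.powersetCard (ρ.card + m)).filter (fun π => ρ ⊆ π)).card
      = (T.card - ρ.card).choose m := by
  rw [← card_sdiff_of_subset h, ← card_powersetCard m (T \ ρ)]
  refine card_bij' (fun π _ => π \ ρ) (fun σ _ => ρ ∪ σ) ?_ ?_ ?_ ?_
  · intro π hπ
    simp only [mem_filter, mem_powersetCard] at hπ ⊢
    exact ⟨sdiff_subset_sdiff hπ.1.1 le_rfl, by rw [card_sdiff_of_subset hπ.2]; omega⟩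
  · intro σ hσ
    simp only [mem_filter, mem_powersetCard] at hσ ⊢
    have hd : Disjoint ρ σ := disjoint_of_subset_right hσ.1 disjoint_sdiff
    exact ⟨⟨union_subset h (hσ.1.trans sdiff_subset), by rw [card_union_of_disjoint hd, hσ.2]⟩,
      subset_union_left⟩
  · intro π hπ
    simp only [mem_filter] at hπ
    exact union_sdiff_of_subset hπ.2
  · intro σ hσ
    simp only [mem_powersetCard] at hσ
    have hd : Disjoint ρ σ := disjoint_of_subset_right hσ.1 disjoint_sdiff
    exact union_sdiff_cancel_left hd

/-- The mean of `f` over the `k`-element subsets of `T`, i.e. the expectation of `f` at the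
size-`k` member of the random chain obtained from `T` by repeatedly deleting a uniformly random
element.  It is `0` when `k > |T|`. -/
noncomputable def avg (k : ℕ) (f : Finset V → ℝ) (T : Finset V) : ℝ :=
  (∑ σ ∈ T.powersetCard k, f σ) / (T.card.choose k : ℝ)

theorem avg_mono {k : ℕ} {f g : Finset V → ℝ} {T : Finset V}
    (h : ∀ σ ⊆ T, σ.card = k → f σ ≤ g σ) : avg k f T ≤ avg k g T := by
  unfold avg
  gcongr with σ hσ
  rw [mem_powersetCard] at hσ
  exact h σ hσ.1 hσ.2

theorem avg_congr {k : ℕ} {f g : Finset V → ℝ} {T : Finset V}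
    (h : ∀ σ ⊆ T, σ.card = k → f σ = g σ) : avg k f T = avg k g T :=
  le_antisymm (avg_mono fun σ a b => (h σ a b).le) (avg_mono fun σ a b => (h σ a b).ge)

theorem avg_add (k : ℕ) (f g : Finset V → ℝ) (T : Finset V) :
    avg k (fun σ => f σ + g σ) T = avg k f T + avg k g T := by
  simp [avg, sum_add_distrib, add_div]

theorem avg_mul (k : ℕ) (c : ℝ) (f : Finset V → ℝ) (T : Finset V) :
    avg k (fun σ => c * f σ) T = c * avg k f T := by
  simp [avg, ← mul_sum, mul_div_assoc]

theorem avg_const {k : ℕ} (c : ℝ) {T : Finset V} (h : k ≤ T.card) :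
    avg k (fun _ => c) T = c := by
  have : (T.card.choose k : ℝ) ≠ 0 := by exact_mod_cast (Nat.choose_pos h).ne'
  simp [avg, field]

theorem avg_nonneg {k : ℕ} {f : Finset V → ℝ} {T : Finset V} (h : ∀ σ, 0 ≤ f σ) :
    0 ≤ avg k f T := div_nonneg (sum_nonneg fun _ _ => h _) (by positivity)

/-- Tower property: a uniform `l`-subset of a uniform `k`-subset of `T` is a uniform `l`-subset
of `T`. -/
theorem avg_avg {l k : ℕ} {T : Finset V} (hlk : l ≤ k) (hk : k ≤ T.card) (g : Finset V → ℝ) :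
    avg k (avg l g) T = avg l g T := by
  have h1 : ∑ σ ∈ T.powersetCard k, ∑ ρ ∈ σ.powersetCard l, g ρ
      = ((T.card - l).choose (k - l) : ℝ) * ∑ ρ ∈ T.powersetCard l, g ρ := by
    rw [sum_comm' (t' := T.powersetCard l)
      (s' := fun ρ => (T.powersetCard k).filter (fun π => ρ ⊆ π))]
    · rw [mul_sum]
      refine sum_congr rfl fun ρ hρ => ?_
      rw [mem_powersetCard] at hρ
      have := card_between ρ T hρ.1 (k - l)
      rw [hρ.2, Nat.add_sub_cancel' hlk] at this
      rw [sum_const, this, nsmul_eq_mul]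
    · intro σ ρ
      simp only [mem_filter, mem_powersetCard]
      constructor
      · rintro ⟨⟨a, b⟩, c, e⟩; exact ⟨⟨⟨a, b⟩, c⟩, c.trans a, e⟩
      · rintro ⟨⟨⟨a, b⟩, c⟩, _, e⟩; exact ⟨⟨a, b⟩, c, e⟩
  have h2 : avg k (avg l g) T
      = (∑ σ ∈ T.powersetCard k, ∑ ρ ∈ σ.powersetCard l, g ρ) /
        ((T.card.choose k : ℝ) * (k.choose l : ℝ)) := by
    unfold avg
    rw [mul_comm, ← div_div, sum_div _ _ (k.choose l : ℝ)]
    congr 1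
    refine sum_congr rfl fun σ hσ => ?_
    rw [(mem_powersetCard.1 hσ).2]
  have h3 : (T.card.choose k : ℝ) * (k.choose l : ℝ)
      = (T.card.choose l : ℝ) * ((T.card - l).choose (k - l) : ℝ) := by
    exact_mod_cast Nat.choose_mul hlk
  have h4 : ((T.card - l).choose (k - l) : ℝ) ≠ 0 := by
    exact_mod_cast (Nat.choose_pos (by omega)).ne'
  rw [h2, h1, h3, avg, mul_comm, mul_div_mul_right _ _ h4]

/-! ### Expectations over the random chain of faces -/

/-- The expectation of `f (P_{k-1})`, where `P_d` is a uniformly random top face and `P_{k-1}` is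
a uniformly random subset of `P_d` of cardinality `k`. -/
noncomputable def ex (X : SC V d) (k : ℕ) (f : Finset V → ℝ) : ℝ :=
  (∑ T ∈ X.fc (d + 1), avg k f T) / ((X.fc (d + 1)).card : ℝ)

theorem mem_fc {X : SC V d} {k : ℕ} {σ : Finset V} :
    σ ∈ X.fc k ↔ σ ∈ X.faces ∧ σ.card = k := by simp [SC.fc]

theorem mem_fc_of_subset {X : SC V d} {k : ℕ} {σ T : Finset V} (hT : T ∈ X.faces) (h : σ ⊆ T)
    (hk : σ.card = k) : σ ∈ X.fc k := mem_fc.2 ⟨X.down_closed T hT σ h, hk⟩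

theorem fc_top_pos (X : SC V d) : (0 : ℝ) < ((X.fc (d + 1)).card : ℝ) := by
  obtain ⟨τ, h1, -, h2⟩ := X.pure ∅ X.empty_mem
  exact_mod_cast card_pos.2 ⟨τ, mem_fc.2 ⟨h1, h2⟩⟩

theorem deg_pos {X : SC V d} {σ : Finset V} (h : σ ∈ X.faces) : (0 : ℝ) < (X.deg σ : ℝ) := by
  obtain ⟨τ, h1, h3, h2⟩ := X.pure σ h
  have : 0 < X.deg σ := card_pos.2 ⟨τ, mem_filter.2 ⟨mem_fc.2 ⟨h1, h2⟩, h3⟩⟩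
  exact_mod_cast this

/-- Weighting a face by its degree amounts to summing over the top faces containing it. -/
theorem sum_deg_mul (X : SC V d) (k : ℕ) (f : Finset V → ℝ) :
    ∑ σ ∈ X.fc k, (X.deg σ : ℝ) * f σ
      = ∑ T ∈ X.fc (d + 1), ∑ σ ∈ T.powersetCard k, f σ := by
  have : ∀ σ, (X.deg σ : ℝ) * f σ = ∑ T ∈ (X.fc (d + 1)).filter (fun T => σ ⊆ T), f σ := by
    intro σ; rw [sum_const, nsmul_eq_mul]; rfl
  simp_rw [this]
  refine sum_comm' fun σ T => ?_
  simp only [mem_filter, mem_powersetCard, mem_fc]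
  constructor
  · rintro ⟨⟨a, b⟩, c, e⟩; exact ⟨⟨e, b⟩, c⟩
  · rintro ⟨⟨e, b⟩, c⟩; exact ⟨⟨X.down_closed T c.1 σ e, b⟩, c, e⟩

theorem sum_deg_mul_eq_ex (X : SC V d) {k : ℕ} (hk : k ≤ d + 1) (f : Finset V → ℝ) :
    ∑ σ ∈ X.fc k, (X.deg σ : ℝ) * f σ
      = ((X.fc (d + 1)).card : ℝ) * ((d + 1).choose k : ℝ) * ex X k f := by
  have h0 := fc_top_pos X
  have h1 : ((d + 1).choose k : ℝ) ≠ 0 := by exact_mod_cast (Nat.choose_pos hk).ne'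
  rw [sum_deg_mul, ex, mul_right_comm, mul_div_cancel₀ _ h0.ne', sum_mul]
  refine sum_congr rfl fun T hT => ?_
  rw [avg, (mem_fc.1 hT).2, div_mul_cancel₀ _ h1]

theorem sum_deg (X : SC V d) (k : ℕ) :
    ∑ σ ∈ X.fc k, (X.deg σ : ℝ) = ((X.fc (d + 1)).card : ℝ) * ((d + 1).choose k : ℝ) := by
  have h := sum_deg_mul X k (fun _ => 1)
  simp only [mul_one] at h
  rw [h, ← nsmul_eq_mul, ← sum_const]
  refine sum_congr rfl fun T hT => ?_
  rw [sum_const, card_powersetCard, (mem_fc.1 hT).2, nsmul_eq_mul, mul_one]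

theorem ex_mono {X : SC V d} {k : ℕ} {f g : Finset V → ℝ}
    (h : ∀ σ ∈ X.fc k, f σ ≤ g σ) : ex X k f ≤ ex X k g := by
  unfold ex
  gcongr with T hT
  exact avg_mono fun σ a b => h σ (mem_fc_of_subset (mem_fc.1 hT).1 a b)

theorem ex_congr {X : SC V d} {k : ℕ} {f g : Finset V → ℝ}
    (h : ∀ σ ∈ X.fc k, f σ = g σ) : ex X k f = ex X k g :=
  le_antisymm (ex_mono fun σ a => (h σ a).le) (ex_mono fun σ a => (h σ a).ge)

theorem ex_add (X : SC V d) (k : ℕ) (f g : Finset V → ℝ) :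
    ex X k (fun σ => f σ + g σ) = ex X k f + ex X k g := by
  simp [ex, avg_add, sum_add_distrib, add_div]

theorem ex_mul (X : SC V d) (k : ℕ) (c : ℝ) (f : Finset V → ℝ) :
    ex X k (fun σ => c * f σ) = c * ex X k f := by
  simp [ex, avg_mul, ← mul_sum, mul_div_assoc]

theorem ex_sum (X : SC V d) (k : ℕ) (s : Finset ℕ) (f : ℕ → Finset V → ℝ) :
    ex X k (fun σ => ∑ m ∈ s, f m σ) = ∑ m ∈ s, ex X k (f m) := by
  induction s using Finset.induction_on with
  | empty => simp [ex, avg]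
  | insert a s ha ih => simp_rw [sum_insert ha]; rw [ex_add, ih]

theorem ex_avg (X : SC V d) {l k : ℕ} (hlk : l ≤ k) (hk : k ≤ d + 1) (g : Finset V → ℝ) :
    ex X k (avg l g) = ex X l g := by
  unfold ex
  congr 1
  refine sum_congr rfl fun T hT => avg_avg hlk ?_ g
  rw [(mem_fc.1 hT).2]; exact hk

/-- `SC.prNI` as an expectation over the chain, valid for sizes not exceeding that of a top face. -/
theorem prNI_eq (X : SC V d) {ka kb : ℕ} (hka : ka ≤ d + 1) (A B : Finset (Finset V)) :
    X.prNI ka kb A B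
      = ex X ka (fun σ => if σ ∈ A then avg kb (fun ρ => if ρ ∉ B then 1 else 0) σ else 0) := by
  have h0 := fc_top_pos X
  have h1 : ((d + 1).choose ka : ℝ) ≠ 0 := by exact_mod_cast (Nat.choose_pos hka).ne'
  have h := sum_deg_mul_eq_ex X hka
    (fun σ => if σ ∈ A then avg kb (fun ρ => if ρ ∉ B then 1 else 0) σ else 0)
  rw [SC.prNI, sum_deg X ka, ← div_div, sum_div, div_eq_iff (mul_ne_zero h0.ne' h1),
    mul_comm (ex _ _ _), ← h, sum_filter]
  refine sum_congr rfl fun σ hσ => ?_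
  split_ifs
  · rw [avg, (mem_fc.1 hσ).2, mul_div_assoc, card_filter]; push_cast; rfl
  · simp

/-! ### Links -/

/-- Every top face of the link of `ρ` has the same number of `m`-element subsets; this evaluates
the denominator in `SC.linkSubsetNorm`. -/
theorem sum_deg_above (X : SC V d) {ρ : Finset V} (m : ℕ) :
    ∑ π ∈ (X.fc (ρ.card + m)).filter (fun π => ρ ⊆ π), (X.deg π : ℝ)
      = ((d + 1 - ρ.card).choose m : ℝ) * (X.deg ρ : ℝ) := by
  have h := sum_deg_mul X (ρ.card + m) (fun π => if ρ ⊆ π then 1 else 0)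
  simp only [mul_ite, mul_one, mul_zero] at h
  rw [sum_filter, h, SC.deg, mul_comm, ← nsmul_eq_mul, ← sum_const, sum_filter]
  refine sum_congr rfl fun T hT => ?_
  rw [← sum_filter, sum_const, nsmul_eq_mul, mul_one]
  split_ifs with hs
  · rw [card_between ρ T hs, (mem_fc.1 hT).2]
  · rw [Nat.cast_eq_zero, card_eq_zero, filter_eq_empty_iff]
    exact fun π hπ hρ => hs (hρ.trans (mem_powersetCard.1 hπ).1)

/-- Conditioning on the lower face: the probability that `P_{k-1} = ρ` satisfies `P` and that
`P_{k+m-1}` adds to `ρ` only vertices of `S ρ` is the sum over `ρ` of `Pr[P_{k-1} = ρ]` times the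
norm in the link of `ρ` of the `m`-subsets of `S ρ`. -/
theorem ex_avg_link (X : SC V d) {k m : ℕ} (hk : k + m ≤ d + 1) (P : Finset V → Prop)
    (S : Finset V → Finset V) :
    ex X (k + m) (fun π => avg k (fun ρ => if P ρ ∧ π \ ρ ⊆ S ρ then 1 else 0) π)
      = (∑ ρ ∈ (X.fc k).filter P, (X.deg ρ : ℝ) * X.linkSubsetNorm ρ m (S ρ)) /
        (((X.fc (d + 1)).card : ℝ) * ((d + 1).choose k : ℝ)) := by
  have h0 := fc_top_pos X
  have h1 : ((d + 1).choose (k + m) : ℝ) ≠ 0 := by exact_mod_cast (Nat.choose_pos hk).ne'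
  have h1' : ((d + 1).choose k : ℝ) ≠ 0 := by exact_mod_cast (Nat.choose_pos (by omega)).ne'
  have h2 : ((d + 1 - k).choose m : ℝ) ≠ 0 := by exact_mod_cast (Nat.choose_pos (by omega)).ne'
  have h3 : ((d + 1).choose (k + m) : ℝ) * ((k + m).choose k : ℝ)
      = ((d + 1).choose k : ℝ) * ((d + 1 - k).choose m : ℝ) := by
    have := Nat.choose_mul (n := d + 1) (Nat.le_add_right k m)
    rw [Nat.add_sub_cancel_left] at this
    exact_mod_cast this
  have h4 : ((k + m).choose k : ℝ) ≠ 0 := by exact_mod_cast (Nat.choose_pos (by omega)).ne'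
  have key : ∑ π ∈ X.fc (k + m), (X.deg π : ℝ) *
        (((k + m).choose k : ℝ) * avg k (fun ρ => if P ρ ∧ π \ ρ ⊆ S ρ then 1 else 0) π)
      = ((d + 1 - k).choose m : ℝ) *
        ∑ ρ ∈ (X.fc k).filter P, (X.deg ρ : ℝ) * X.linkSubsetNorm ρ m (S ρ) := by
    have e1 : ∀ π ∈ X.fc (k + m), (X.deg π : ℝ) *
        (((k + m).choose k : ℝ) * avg k (fun ρ => if P ρ ∧ π \ ρ ⊆ S ρ then 1 else 0) π)
        = ∑ ρ ∈ π.powersetCard k with P ρ ∧ π \ ρ ⊆ S ρ, (X.deg π : ℝ) := by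
      intro π hπ
      rw [avg, (mem_fc.1 hπ).2, mul_div_cancel₀ _ h4, mul_sum, sum_filter]
      exact sum_congr rfl fun ρ _ => by split_ifs <;> simp
    rw [sum_congr rfl e1, sum_comm' (t' := (X.fc k).filter P)
      (s' := fun ρ => (X.fc (k + m)).filter (fun π => ρ ⊆ π ∧ π \ ρ ⊆ S ρ)), mul_sum]
    · refine sum_congr rfl fun ρ hρ => ?_
      obtain ⟨hρX, hρk⟩ := mem_fc.1 (mem_filter.1 hρ).1
      have hdeg := deg_pos hρX
      have hab := sum_deg_above X (ρ := ρ) m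
      rw [SC.linkSubsetNorm, hab, hρk]
      field_simp
    · intro π ρ
      simp only [mem_filter, mem_powersetCard, mem_fc]
      constructor
      · rintro ⟨a, ⟨b, c⟩, e, f⟩
        exact ⟨⟨a, b, f⟩, ⟨X.down_closed π a.1 ρ b, c⟩, e⟩
      · rintro ⟨⟨a, b, f⟩, ⟨_, c⟩, e⟩
        exact ⟨a, ⟨b, c⟩, e, f⟩
  rw [sum_deg_mul_eq_ex X hk, ex_mul, mul_assoc, ← mul_assoc ((d + 1).choose (k + m) : ℝ), h3] at key
  rw [eq_div_iff (mul_ne_zero h0.ne' h1')]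
  apply mul_left_cancel₀ h2
  rw [← key]; ring

/-- The set of vertices `v` with `ρ ∪ {v} ∈ A`.  Away from `ρ` this is the localization of `A` to
the link of `ρ`; elements of `ρ` itself may also occur but are irrelevant to `linkSubsetNorm`. -/
noncomputable def extVerts (A : Finset (Finset V)) (ρ : Finset V) : Finset V :=
  univ.filter fun v => insert v ρ ∈ A

theorem sdiff_subset_extVerts {A : Finset (Finset V)} {ρ σ : Finset V} (h : ρ ⊆ σ)
    (hc : σ.card = ρ.card + 1) : σ \ ρ ⊆ extVerts A ρ ↔ σ ∈ A := by
  have : (σ \ ρ).card = 1 := by rw [card_sdiff_of_subset h]; omega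
  obtain ⟨v, hv⟩ := card_eq_one.1 this
  have h2 : insert v ρ = σ := by
    rw [insert_eq, ← hv, sdiff_union_of_subset h]
  rw [hv, singleton_subset_iff, extVerts, mem_filter, h2]
  simp

/-- Skeleton expansion at one level: the probability that `P_{k-1}` is not fat while both faces
strictly between `P_{k-1}` and `P_{k+1}` are fat is at most `η^(2^(i-k)) + α` times the probability
that `P_{k-1}` is not fat and `P_k` is fat.  Indeed in the link of a non-fat face the fat faces
form a vertex set of norm less than `η^(2^(i-k))`. -/
theorem level_le (X : SC V d) {α : ℝ} (hX : X.IsSkeletonExpander α)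
    {i : ℕ} (hi : i < d) {η : ℝ} (W : Finset (Finset V)) {k : ℕ} (hk : k ≤ i) :
    ex X (k + 2) (fun π => avg k (fun ρ => if ρ ∉ X.fat i W η (i + 1 - k) ∧
        π \ ρ ⊆ extVerts (X.fat i W η (i - k)) ρ then 1 else 0) π)
      ≤ (η ^ 2 ^ (i - k) + α) *
        X.prNI (k + 1) k (X.fat i W η (i - k)) (X.fat i W η (i + 1 - k)) := by
  have e : X.prNI (k + 1) k (X.fat i W η (i - k)) (X.fat i W η (i + 1 - k))
      = ex X (k + 1) (fun π => avg k (fun ρ => if ρ ∉ X.fat i W η (i + 1 - k) ∧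
        π \ ρ ⊆ extVerts (X.fat i W η (i - k)) ρ then 1 else 0) π) := by
    rw [prNI_eq X (by omega)]
    refine ex_congr fun σ hσ => ?_
    have hc := (mem_fc.1 hσ).2
    by_cases hA : σ ∈ X.fat i W η (i - k)
    · rw [if_pos hA]
      refine avg_congr fun ρ h1 h2 => ?_
      simp only [sdiff_subset_extVerts h1 (hc.trans (by rw [h2])), hA, and_true]
    · rw [if_neg hA]
      refine (avg_const (k := k) (T := σ) 0 (by omega)).symm.trans ?_
      refine avg_congr fun ρ h1 h2 => ?_
      simp only [sdiff_subset_extVerts h1 (hc.trans (by rw [h2])), hA, and_false, if_false]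
  have L : ∀ m, k + m ≤ d + 1 →
      ex X (k + m) (fun π => avg k (fun ρ => if ρ ∉ X.fat i W η (i + 1 - k) ∧
        π \ ρ ⊆ extVerts (X.fat i W η (i - k)) ρ then 1 else 0) π)
      = (∑ ρ ∈ (X.fc k).filter (fun ρ => ρ ∉ X.fat i W η (i + 1 - k)),
          (X.deg ρ : ℝ) * X.linkSubsetNorm ρ m (extVerts (X.fat i W η (i - k)) ρ)) /
        (((X.fc (d + 1)).card : ℝ) * ((d + 1).choose k : ℝ)) := by
    intro m hm
    convert ex_avg_link X hm (fun ρ => ρ ∉ X.fat i W η (i + 1 - k))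
      (extVerts (X.fat i W η (i - k)))
  -- Both sides become sums over the non-fat `ρ` with the same normalization.
  rw [e, L 2 (by omega), L 1 (by omega), ← mul_div_assoc, mul_sum]
  have h0 := fc_top_pos X
  refine div_le_div_of_nonneg_right (sum_le_sum fun ρ hρ => ?_) (by positivity)
  obtain ⟨hρ1, hρ2⟩ := mem_filter.1 hρ
  obtain ⟨hρX, hρk⟩ := mem_fc.1 hρ1
  have hlink : X.linkSubsetNorm ρ 1 (extVerts (X.fat i W η (i - k)) ρ)
      = X.linkNorm ρ (k + 1) (X.fat i W η (i - k)) := by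
    rw [SC.linkSubsetNorm, SC.linkNorm, hρk]
    congr 2
    refine filter_congr fun σ hσ => and_congr_right fun hs => ?_
    exact sdiff_subset_extVerts hs ((mem_fc.1 hσ).2.trans (by rw [hρk]))
  have hlt : X.linkSubsetNorm ρ 1 (extVerts (X.fat i W η (i - k)) ρ) < η ^ 2 ^ (i - k) := by
    rw [hlink]
    by_contra! hge
    apply hρ2
    rw [show i + 1 - k = (i - k) + 1 by omega, SC.fat, mem_filter,
      show i - (i - k) = k by omega]
    exact ⟨hρ1, hge⟩
  have hnn : 0 ≤ X.linkSubsetNorm ρ 1 (extVerts (X.fat i W η (i - k)) ρ) := by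
    unfold SC.linkSubsetNorm; positivity
  have := hX ρ hρX (extVerts (X.fat i W η (i - k)) ρ)
  rw [mul_left_comm]
  refine mul_le_mul_of_nonneg_left (this.trans ?_) (Nat.cast_nonneg _)
  rw [mul_comm]
  gcongr

/-! ### Descending along a chain

Here `A k` plays the role of the fat faces of cardinality `k`. -/

/-- The indicator, for `|ρ| = k` and `ρ ⊆ π` with `|π| = k + 2`, of the event that `ρ ∉ A k` while
both `(k+1)`-sets strictly between `ρ` and `π` belong to `A (k + 1)`. -/
noncomputable def linkInd (A : ℕ → Finset (Finset V)) (k : ℕ) (π ρ : Finset V) : ℝ :=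
  if ρ ∉ A k ∧ π \ ρ ⊆ extVerts (A (k + 1)) ρ then 1 else 0

/-- The indicator of the event that some `k`-element subset of `σ` is not in `A k`. -/
noncomputable def hasThin (A : ℕ → Finset (Finset V)) (k : ℕ) (σ : Finset V) : ℝ :=
  if ∃ ρ ⊆ σ, ρ.card = k ∧ ρ ∉ A k then 1 else 0

theorem linkInd_nonneg (A : ℕ → Finset (Finset V)) (k : ℕ) (π ρ : Finset V) : 0 ≤ linkInd A k π ρ := by
  unfold linkInd; split_ifs <;> norm_num

theorem hasThin_nonneg (A : ℕ → Finset (Finset V)) (k : ℕ) (σ : Finset V) : 0 ≤ hasThin A k σ := by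
  unfold hasThin; split_ifs <;> norm_num

/-- The dichotomy at one step: either both sets strictly between `ρ` and `π` lie in `A (k + 1)`, or
one of them witnesses `hasThin A (k + 1) π`. -/
theorem nonmem_le (A : ℕ → Finset (Finset V)) {k : ℕ} {π ρ : Finset V} (h : ρ ⊆ π)
    (hk : ρ.card = k) :
    (if ρ ∉ A k then (1 : ℝ) else 0) ≤ linkInd A k π ρ + hasThin A (k + 1) π := by
  have hb := linkInd_nonneg A k π ρ
  have hh := hasThin_nonneg A (k + 1) π
  by_cases hA : ρ ∉ A k
  · rw [if_pos hA]
    by_cases hS : π \ ρ ⊆ extVerts (A (k + 1)) ρ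
    · rw [linkInd, if_pos ⟨hA, hS⟩]; linarith
    · obtain ⟨v, hv, hv2⟩ := not_subset.1 hS
      rw [mem_sdiff] at hv
      have : hasThin A (k + 1) π = 1 := by
        refine if_pos ⟨insert v ρ, insert_subset hv.1 h, ?_, ?_⟩
        · rw [card_insert_of_notMem hv.2, hk]
        · simpa [extVerts] using hv2
      linarith
  · rw [if_neg hA]
    linarith

/-- A subset of `σ` of cardinality `k` outside `A k` is one of `k + 1` candidates; the union bound
over these produces the factor `k + 1`. -/
theorem hasThin_le (A : ℕ → Finset (Finset V)) {k : ℕ} {π σ : Finset V} (h : σ ⊆ π)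
    (hk : σ.card = k + 1) :
    hasThin A k σ ≤ ((k : ℝ) + 1) * avg k (linkInd A k π) σ + hasThin A (k + 1) π := by
  have e : ((k : ℝ) + 1) * avg k (linkInd A k π) σ = ∑ ρ ∈ σ.powersetCard k, linkInd A k π ρ := by
    rw [avg, hk, Nat.choose_succ_self_right]; push_cast; field_simp
  have hh := hasThin_nonneg A (k + 1) π
  have hs : 0 ≤ ∑ ρ ∈ σ.powersetCard k, linkInd A k π ρ := sum_nonneg fun _ _ => linkInd_nonneg ..
  rw [e, hasThin]
  split_ifs with hex
  · obtain ⟨ρ, h1, h2, h3⟩ := hex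
    have h4 := nonmem_le A (h1.trans h) h2
    rw [if_pos h3] at h4
    have h5 := single_le_sum (f := linkInd A k π) (fun x _ => linkInd_nonneg A k π x)
      (mem_powersetCard.2 ⟨h1, h2⟩)
    linarith
  · linarith

theorem avg_hasThin_le (A : ℕ → Finset (Finset V)) {k : ℕ} {τ : Finset V} (hk : k + 2 ≤ τ.card) :
    avg (k + 1) (hasThin A k) τ ≤ ((k : ℝ) + 1) * avg (k + 2) (fun π => avg k (linkInd A k π) π) τ
      + avg (k + 2) (hasThin A (k + 1)) τ := by
  rw [← avg_avg (k := k + 2) (by omega) hk, ← avg_mul, ← avg_add]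
  refine avg_mono fun π _ hπ => ?_
  rw [← avg_avg (l := k) (k := k + 1) (T := π) (by omega) (by omega), ← avg_mul,
    ← avg_const (k := k + 1) (T := π) (hasThin A (k + 1) π) (by omega), ← avg_add]
  refine avg_mono fun σ h1 h2 => ?_
  exact hasThin_le A h1 h2

/-- If every `(i+1)`-subset of `τ` lies in `A (i + 1)`, the recursion `avg_hasThin_le` terminates
at level `i + 1` with no remainder. -/
theorem avg_hasThin_le_sum (A : ℕ → Finset (Finset V)) {i : ℕ} {τ : Finset V} (hτ : τ.card = i + 2)
    (h0 : hasThin A (i + 1) τ = 0) (n j : ℕ) (hj : j + n = i + 1) :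
    avg (j + 1) (hasThin A j) τ ≤
      ∑ k ∈ Icc j i, ((k : ℝ) + 1) * avg (k + 2) (fun π => avg k (linkInd A k π) π) τ := by
  induction n generalizing j with
  | zero =>
    obtain rfl : j = i + 1 := by omega
    rw [Icc_eq_empty (by omega), sum_empty, ← avg_const (k := i + 2) (T := τ) 0 hτ.ge]
    refine avg_mono fun σ h1 h2 => ?_
    rw [eq_of_subset_of_card_le h1 (by omega), h0]
  | succ n ih =>
    rw [← add_sum_Ioc_eq_sum_Icc (by omega)]
    have := ih (j + 1) (by omega)
    rw [Icc_add_one_left_eq_Ioc] at this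
    exact (avg_hasThin_le A (by omega)).trans (by gcongr)

/-- The pathwise bound.  At the bottom level the set outside `A j` is the chain member itself, so no
union bound is needed there and the factor is `1`. -/
theorem avg_nonmem_le_sum (A : ℕ → Finset (Finset V)) {i j : ℕ} {τ : Finset V}
    (hτ : τ.card = i + 2) (h0 : hasThin A (i + 1) τ = 0) (hj : j ≤ i) :
    avg j (fun ρ => if ρ ∉ A j then 1 else 0) τ ≤
      avg (j + 2) (fun π => avg j (linkInd A j π) π) τ +
      ∑ k ∈ Icc (j + 1) i, ((k : ℝ) + 1) * avg (k + 2) (fun π => avg k (linkInd A k π) π) τ := by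
  have h := avg_hasThin_le_sum A hτ h0 (i - j) (j + 1) (by omega)
  refine le_trans ?_ (add_le_add_right h _)
  rw [← avg_avg (k := j + 2) (by omega) (by omega), ← avg_add]
  refine avg_mono fun π _ hπ => ?_
  rw [← avg_const (k := j) (T := π) (hasThin A (j + 1) π) (by omega), ← avg_add]
  refine avg_mono fun ρ h1 h2 => ?_
  exact nonmem_le A h1 h2

end FatChain

open FatChain


/-- **Large norm of non-fat faces implies large norm of non-full faces.**
For an `α`-skeleton expander `X`, every `i`-cochain `W` and `0 ≤ j ≤ i`,
`Pr[P_{i+1} ∈ F^{i+1}(W) ∧ P_{j−1} ∉ S^{j−1}(W)]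
  ≤ (η^(2^(i−j)) + α) Pr[P_j ∈ S^j(W) ∧ P_{j−1} ∉ S^{j−1}(W)]
    + Σ_{k=j+1}^{i} (k+1)(η^(2^(i−k)) + α) Pr[P_k ∈ S^k(W) ∧ P_{k−1} ∉ S^{k−1}(W)]`. -/
theorem statement3 {V : Type} [DecidableEq V] [Fintype V] {d : ℕ} (X : SC V d)
    (α : ℝ) (hα0 : 0 < α) (hX : X.IsSkeletonExpander α)
    (i : ℕ) (hi : i < d) (η : ℝ) (hη0 : 0 < η) (hη1 : η < 1)
    (W : Finset (Finset V)) (hW : W ⊆ X.fc (i + 1))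
    (j : ℕ) (hj : j ≤ i) :
    X.prNI (i + 2) j (X.full i W η (i + 1)) (X.fat i W η (i + 1 - j)) ≤
      (η ^ 2 ^ (i - j) + α) *
          X.prNI (j + 1) j (X.fat i W η (i - j)) (X.fat i W η (i + 1 - j)) +
        ∑ k ∈ Finset.Icc (j + 1) i,
          ((k : ℝ) + 1) * (η ^ 2 ^ (i - k) + α) *
            X.prNI (k + 1) k (X.fat i W η (i - k)) (X.fat i W η (i + 1 - k)) := by
  obtain ⟨A, hA⟩ : ∃ A : ℕ → Finset (Finset V), ∀ k, A k = X.fat i W η (i + 1 - k) :=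
    ⟨_, fun _ => rfl⟩
  have hlev : ∀ k ≤ i, ex X (k + 2) (fun π => avg k (linkInd A k π) π) ≤ (η ^ 2 ^ (i - k) + α) *
      X.prNI (k + 1) k (X.fat i W η (i - k)) (X.fat i W η (i + 1 - k)) := by
    intro k hk
    have e : ∀ π, linkInd A k π = fun ρ => if ρ ∉ X.fat i W η (i + 1 - k) ∧
        π \ ρ ⊆ extVerts (X.fat i W η (i - k)) ρ then 1 else 0 := by
      intro π
      funext ρ
      simp only [linkInd, hA, Nat.add_sub_add_right]
    simp only [e]
    exact level_le X hX hi W hk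
  have h1 : X.prNI (i + 2) j (X.full i W η (i + 1)) (X.fat i W η (i + 1 - j))
      ≤ ex X (i + 2) (fun τ => avg (j + 2) (fun π => avg j (linkInd A j π) π) τ +
          ∑ k ∈ Icc (j + 1) i,
            ((k : ℝ) + 1) * avg (k + 2) (fun π => avg k (linkInd A k π) π) τ) := by
    rw [prNI_eq X (by omega), ← hA]
    refine ex_mono fun τ hτ => ?_
    by_cases hfull : τ ∈ X.full i W η (i + 1)
    · rw [if_pos hfull]
      refine avg_nonmem_le_sum A (mem_fc.1 hτ).2 (if_neg ?_) hj
      rintro ⟨ρ, h1, h2, h3⟩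
      rw [hA] at h3
      exact h3 ((mem_filter.1 hfull).2 ρ h1 h2)
    · rw [if_neg hfull]
      have hnn : ∀ k, 0 ≤ avg (k + 2) (fun π => avg k (linkInd A k π) π) τ := fun k =>
        avg_nonneg fun π => avg_nonneg (linkInd_nonneg A k π)
      exact add_nonneg (hnn j) (sum_nonneg fun k _ => mul_nonneg (by positivity) (hnn k))
  refine h1.trans ?_
  rw [ex_add, ex_sum, ex_avg X (by omega) (by omega)]
  refine add_le_add (hlev j hj) (sum_le_sum fun k hk => ?_)
  rw [mem_Icc] at hk
  rw [ex_mul, ex_avg X (by omega) (by omega), mul_assoc]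
  exact mul_le_mul_of_nonneg_left (hlev k hk.2) (by positivity)
end

section
/- Let X be a pure d-dimensional simplicial complex, 0 ≤ i < d, 0 < η < 1 a fatness constant. Then for every i-cochain W and every −1 ≤ j ≤ i, ‖W‖ ≥ η^(2^(i−j)−1)·‖S^j(W)‖. -/
/-!
The theorem follows from one step down in dimension, iterated `m` times with the exponents adding up
through `2 ^ (m + 1) - 1 = (2 ^ m - 1) + 2 ^ m`.

For one step, let `A` be a set of faces of cardinality `k + 1` and let `T` be the set of faces of
cardinality `k` in whose link `A` has norm at least `t`. Counting pairs (face of cardinality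
`k + 1` above `σ`, top face above it) shows that the degrees of the faces of cardinality `k + 1`
above `σ` sum to `(d + 1 - k) * deg σ` (`SC.sum_deg_above`), so `σ ∈ T` says that
`t * (d + 1 - k) * deg σ` is at most the weight of `A` above `σ`. Summing over `σ ∈ T`, each `ρ ∈ A`
is counted at most `k + 1` times (`SC.sum_sum_above`). The same count over all faces gives
`(d + 1 - k) * D k = (k + 1) * D (k + 1)` for the total degrees `D`, so dividing yields
`t * ‖T‖ ≤ ‖A‖` (`SC.norm_step`).
-/

open Finset

open scoped Classical

/-! ### One step down in dimension -/

namespace SC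

variable {V : Type} [DecidableEq V] [Fintype V] {d : ℕ}

/-- A set of cardinality `k` inside a top face `τ` has one extension by a vertex inside `τ`
for each vertex of `τ \ σ`. -/
lemma card_between (X : SC V d) {k : ℕ} {σ τ : Finset V} (hσ : σ.card = k)
    (hτ : τ ∈ X.fc (d + 1)) (h : σ ⊆ τ) :
    ((X.fc (k + 1)).filter fun ρ => σ ⊆ ρ ∧ ρ ⊆ τ).card = d + 1 - k := by
  obtain ⟨hτX, hτc⟩ := Finset.mem_filter.1 hτ
  have himg : ((X.fc (k + 1)).filter fun ρ => σ ⊆ ρ ∧ ρ ⊆ τ)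
      = (τ \ σ).image fun v => insert v σ := by
    ext ρ
    simp only [fc, Finset.mem_filter, Finset.mem_image, Finset.mem_sdiff]
    constructor
    · rintro ⟨⟨-, hc⟩, h1, h2⟩
      have h3 : (ρ \ σ).card = 1 := by
        rw [Finset.card_sdiff_of_subset h1, hc, hσ]; omega
      obtain ⟨v, hv⟩ := Finset.card_eq_one.1 h3
      have hvm : v ∈ ρ \ σ := by rw [hv]; exact Finset.mem_singleton_self v
      refine ⟨v, ⟨h2 (Finset.mem_sdiff.1 hvm).1, (Finset.mem_sdiff.1 hvm).2⟩, ?_⟩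
      rw [Finset.insert_eq, ← hv, Finset.sdiff_union_of_subset h1]
    · rintro ⟨v, ⟨hv, hvσ⟩, rfl⟩
      have hs : insert v σ ⊆ τ := Finset.insert_subset hv h
      exact ⟨⟨X.down_closed τ hτX _ hs, by rw [Finset.card_insert_of_notMem hvσ, hσ]⟩,
        Finset.subset_insert _ _, hs⟩
  rw [himg, Finset.card_image_of_injOn, Finset.card_sdiff_of_subset h, hτc, hσ]
  intro a ha b hb hab
  have ha' : a ∉ σ := (Finset.mem_sdiff.1 (Finset.mem_coe.1 ha)).2
  have hmem : a ∈ insert b σ := by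
    have : insert a σ = insert b σ := hab
    rw [← this]; exact Finset.mem_insert_self _ _
  exact (Finset.mem_insert.1 hmem).resolve_right ha'

/-- The degrees of the faces one dimension up from `σ` count each top face above `σ` once for
each of the `d + 1 - k` faces between. -/
lemma sum_deg_above (X : SC V d) {k : ℕ} {σ : Finset V} (hσ : σ.card = k) :
    ∑ ρ ∈ (X.fc (k + 1)).filter (fun ρ => σ ⊆ ρ), X.deg ρ = (d + 1 - k) * X.deg σ := by
  have h1 : ∀ ρ ∈ (X.fc (k + 1)).filter (fun ρ => σ ⊆ ρ),
      X.deg ρ = (Finset.bipartiteAbove (fun ρ τ : Finset V => ρ ⊆ τ)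
        ((X.fc (d + 1)).filter fun τ => σ ⊆ τ) ρ).card := by
    intro ρ hρ
    unfold deg Finset.bipartiteAbove
    rw [Finset.filter_filter]
    congr 1
    ext τ
    simp only [Finset.mem_filter, and_congr_right_iff]
    exact fun _ => ⟨fun h => ⟨(Finset.mem_filter.1 hρ).2.trans h, h⟩, fun h => h.2⟩
  rw [Finset.sum_congr rfl h1, Finset.sum_card_bipartiteAbove_eq_sum_card_bipartiteBelow]
  have h2 : ∀ τ ∈ (X.fc (d + 1)).filter (fun τ => σ ⊆ τ),
      (Finset.bipartiteBelow (fun ρ τ : Finset V => ρ ⊆ τ)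
        ((X.fc (k + 1)).filter fun ρ => σ ⊆ ρ) τ).card = d + 1 - k := by
    intro τ hτ
    obtain ⟨hτ1, hτ2⟩ := Finset.mem_filter.1 hτ
    rw [← X.card_between hσ hτ1 hτ2]
    unfold Finset.bipartiteBelow
    rw [Finset.filter_filter]
  rw [Finset.sum_congr rfl h2, Finset.sum_const, smul_eq_mul, mul_comm, deg]

/-- The weight of `A` above `σ`, summed over all `σ`, counts each member of `A` exactly `k + 1`
times: a face of cardinality `k + 1` has `k + 1` facets, all of them faces of `X`. -/
lemma sum_sum_above (X : SC V d) (k : ℕ) (A : Finset (Finset V)) :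
    ∑ σ ∈ X.fc k, ∑ ρ ∈ (X.fc (k + 1)).filter (fun ρ => σ ⊆ ρ ∧ ρ ∈ A), (X.deg ρ : ℝ)
      = (k + 1) * ∑ ρ ∈ (X.fc (k + 1)).filter (· ∈ A), (X.deg ρ : ℝ) := by
  have hswap : ∑ σ ∈ X.fc k,
      ∑ ρ ∈ (X.fc (k + 1)).filter (fun ρ => σ ⊆ ρ ∧ ρ ∈ A), (X.deg ρ : ℝ)
      = ∑ ρ ∈ (X.fc (k + 1)).filter (· ∈ A),
        ∑ _σ ∈ (X.fc k).filter (fun σ => σ ⊆ ρ), (X.deg ρ : ℝ) := by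
    apply Finset.sum_comm'
    intro σ ρ
    simp only [Finset.mem_filter]
    tauto
  rw [hswap, Finset.mul_sum]
  refine Finset.sum_congr rfl fun ρ hρ => ?_
  obtain ⟨hρX, hρc⟩ := Finset.mem_filter.1 (Finset.mem_filter.1 hρ).1
  have hset : (X.fc k).filter (fun σ => σ ⊆ ρ) = ρ.powersetCard k := by
    ext σ
    simp only [fc, Finset.mem_filter, Finset.mem_powersetCard]
    exact ⟨fun h => ⟨h.2, h.1.2⟩, fun h => ⟨⟨X.down_closed ρ hρX σ h.1, h.2⟩, h.1⟩⟩
  rw [Finset.sum_const, hset, Finset.card_powersetCard, hρc, Nat.choose_succ_self_right,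
    nsmul_eq_mul]
  push_cast
  rfl

/-- One step of the descent, by weighted double counting: the norm of the set of faces in whose
link `A` has norm at least `t` is at most `‖A‖ / t` when `t` is positive. -/
lemma norm_step (X : SC V d) {k : ℕ} (hk : k ≤ d) (A : Finset (Finset V)) (t : ℝ) :
    t * X.norm k ((X.fc k).filter fun σ => t ≤ X.linkNorm σ (k + 1) A)
      ≤ X.norm (k + 1) A := by
  set T := (X.fc k).filter fun σ => t ≤ X.linkNorm σ (k + 1) A with hT
  have hTT : (X.fc k).filter (· ∈ T) = T := by
    ext σ; simp [hT]
  have hc : (0 : ℝ) < ((d + 1 - k : ℕ) : ℝ) := by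
    exact_mod_cast (by omega : 0 < d + 1 - k)
  set c : ℝ := ((d + 1 - k : ℕ) : ℝ)
  have habove : ∀ σ ∈ X.fc k,
      ∑ ρ ∈ (X.fc (k + 1)).filter (fun ρ => σ ⊆ ρ), (X.deg ρ : ℝ) = c * X.deg σ := by
    intro σ hσ
    have h := congrArg (Nat.cast (R := ℝ)) (X.sum_deg_above (Finset.mem_filter.1 hσ).2)
    rwa [Nat.cast_sum, Nat.cast_mul] at h
  have hfat : ∀ σ ∈ T, t * (c * X.deg σ)
      ≤ ∑ ρ ∈ (X.fc (k + 1)).filter (fun ρ => σ ⊆ ρ ∧ ρ ∈ A), (X.deg ρ : ℝ) := by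
    intro σ hσ
    obtain ⟨h1, h2⟩ := Finset.mem_filter.1 hσ
    rw [linkNorm, habove σ h1] at h2
    rcases (by positivity : (0 : ℝ) ≤ c * X.deg σ).eq_or_lt with h0 | h0
    · rw [← h0, mul_zero]; positivity
    · exact (le_div_iff₀ h0).1 h2
  have hsum : t * c * ∑ σ ∈ T, (X.deg σ : ℝ)
      ≤ (k + 1) * ∑ ρ ∈ (X.fc (k + 1)).filter (· ∈ A), (X.deg ρ : ℝ) := by
    rw [← X.sum_sum_above k A, Finset.mul_sum]
    calc ∑ σ ∈ T, t * c * (X.deg σ : ℝ)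
        ≤ ∑ σ ∈ T, ∑ ρ ∈ (X.fc (k + 1)).filter (fun ρ => σ ⊆ ρ ∧ ρ ∈ A), (X.deg ρ : ℝ) :=
          Finset.sum_le_sum fun σ hσ => by rw [mul_assoc]; exact hfat σ hσ
      _ ≤ _ := Finset.sum_le_sum_of_subset_of_nonneg (Finset.filter_subset _ _)
          fun _ _ _ => by positivity
  -- Taking `A` to be all faces of cardinality `k + 1` relates the two normalizations.
  have htot : c * ∑ σ ∈ X.fc k, (X.deg σ : ℝ) = (k + 1) * ∑ ρ ∈ X.fc (k + 1), (X.deg ρ : ℝ) := by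
    have h := X.sum_sum_above k (X.fc (k + 1))
    rw [Finset.filter_mem_eq_inter, Finset.inter_self] at h
    rw [← h, Finset.mul_sum]
    refine Finset.sum_congr rfl fun σ hσ => ?_
    rw [← habove σ hσ]
    refine Finset.sum_congr ?_ fun _ _ => rfl
    ext ρ
    simp only [Finset.mem_filter]
    tauto
  have hk1 : (0 : ℝ) < (k : ℝ) + 1 := by positivity
  unfold norm
  rw [hTT]
  have hl : t * ((∑ σ ∈ T, (X.deg σ : ℝ)) / ∑ σ ∈ X.fc k, (X.deg σ : ℝ))
      = (t * c * ∑ σ ∈ T, (X.deg σ : ℝ)) / (c * ∑ σ ∈ X.fc k, (X.deg σ : ℝ)) := by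
    rw [mul_comm t c, mul_assoc, mul_div_mul_left _ _ hc.ne', mul_div_assoc]
  rw [hl, ← mul_div_mul_left _ (∑ ρ ∈ X.fc (k + 1), (X.deg ρ : ℝ)) hk1.ne', htot]
  exact div_le_div_of_nonneg_right hsum (by positivity)

end SC

/-! ### Iterating the step -/

/-- **Large norm of fat faces implies large norm of `W`.**
For every `i`-cochain `W` and every `−1 ≤ j ≤ i` (written as `j = i − m` with
`0 ≤ m ≤ i + 1`), `‖W‖ ≥ η^(2^(i−j)−1) ‖S^j(W)‖`. -/
theorem statement4 {V : Type} [DecidableEq V] [Fintype V] {d : ℕ} (X : SC V d)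
    (i : ℕ) (hi : i < d) (η : ℝ) (hη0 : 0 < η) (hη1 : η < 1)
    (W : Finset (Finset V)) (hW : W ⊆ X.fc (i + 1))
    (m : ℕ) (hm : m ≤ i + 1) :
    η ^ (2 ^ m - 1) * X.norm (i + 1 - m) (X.fat i W η m) ≤ X.norm (i + 1) W := by
  induction m with
  | zero =>
    simp only [pow_zero, Nat.sub_self, one_mul, Nat.sub_zero, SC.fat]
    have hset : (X.fc (i + 1)).filter (· ∈ (X.fc (i + 1)).filter (· ∈ W))
        = (X.fc (i + 1)).filter (· ∈ W) := by
      ext σ; simp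
    rw [SC.norm, SC.norm, hset]
  | succ m ih =>
    have hk : i + 1 - m = i - m + 1 := by omega
    have hk' : i + 1 - (m + 1) = i - m := by omega
    have ih' := ih (by omega)
    rw [hk] at ih'
    have hexp : 2 ^ (m + 1) - 1 = (2 ^ m - 1) + 2 ^ m := by
      have := Nat.one_le_two_pow (n := m)
      rw [pow_succ]; omega
    rw [hk', hexp, pow_add, mul_assoc]
    exact (mul_le_mul_of_nonneg_left
      (X.norm_step (by omega) (X.fat i W η m) (η ^ 2 ^ m)) (by positivity)).trans ih'
end

section
/- Let X be a pure d-dimensional simplicial complex, 0 ≤ i < d, 0 < η < 1 a fatness constant. Then for every i-cochain W and every 1 ≤ k ≤ i+1, Pr[P_k ∈ F^k(W) and P_{k−1} ∉ F^{k−1}(W)] ≤ k · Pr[P_k ∈ F^k(W) and P_{k−2} ∉ S^{k−2}(W)]. -/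
/-!
The inequality holds face by face. Fix a full `k`-face `τ`, let `a` be the number of its
`(k-1)`-subfaces that are not full, and `b` the number of its `(k-2)`-subfaces that are not fat.
A non-full `(k-1)`-subface contains a non-fat `(k-2)`-face, and each `(k-2)`-subface of `τ` lies
in exactly two `(k-1)`-subfaces of `τ`, so `a ≤ 2 b`. The left side weights `a` by
`1 / (k+1)`, and the right side weights `b` by `k / C(k+1, k-1) = 2 / (k+1)`.
-/


open Finset

open scoped Classical

/-- A set `τ` of cardinality `n + 2` has at most two intermediate sets of cardinality `n + 1`
above each of its `n`-subsets, so a family of `(n+1)`-subsets each of which contains an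
`n`-subset outside `B` has at most twice as many members as there are such `n`-subsets. -/
lemma card_filter_powersetCard_le_two_mul {V : Type} [DecidableEq V] (n : ℕ) (τ : Finset V)
    (hτ : τ.card = n + 2) (F B : Finset (Finset V))
    (h : ∀ σ ⊆ τ, σ.card = n + 1 → σ ∉ F → ∃ ρ ⊆ σ, ρ.card = n ∧ ρ ∉ B) :
    ((τ.powersetCard (n + 1)).filter (· ∉ F)).card ≤
      ((τ.powersetCard n).filter (· ∉ B)).card * 2 := by
  have hsub : (τ.powersetCard (n + 1)).filter (· ∉ F) ⊆
      ((τ.powersetCard n).filter (· ∉ B)).biUnion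
        (fun ρ => (τ \ ρ).image (fun v => insert v ρ)) := by
    intro σ hσ
    simp only [mem_filter, mem_powersetCard] at hσ
    obtain ⟨⟨hστ, hσc⟩, hσF⟩ := hσ
    obtain ⟨ρ, hρσ, hρc, hρB⟩ := h σ hστ hσc hσF
    obtain ⟨v, hv⟩ := card_eq_one.mp
      (show (σ \ ρ).card = 1 by rw [card_sdiff_of_subset hρσ]; omega)
    have hvm : v ∈ σ \ ρ := by simp [hv]
    simp only [mem_biUnion, mem_filter, mem_powersetCard, mem_image]
    refine ⟨ρ, ⟨⟨hρσ.trans hστ, hρc⟩, hρB⟩, v, sdiff_subset_sdiff hστ le_rfl hvm, ?_⟩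
    rw [← sdiff_union_of_subset hρσ, hv]
    rfl
  refine (card_le_card hsub).trans (card_biUnion_le_card_mul _ _ _ fun ρ hρ => ?_)
  simp only [mem_filter, mem_powersetCard] at hρ
  refine card_image_le.trans ?_
  rw [card_sdiff_of_subset hρ.1.1]
  omega

/-- **Full `k`-faces with a non-full `(k−1)`-face related to full `k`-faces with a non-fat
`(k−2)`-face.** For every `i`-cochain `W` and `1 ≤ k ≤ i+1`,
`Pr[P_k ∈ F^k(W) ∧ P_{k−1} ∉ F^{k−1}(W)] ≤ k · Pr[P_k ∈ F^k(W) ∧ P_{k−2} ∉ S^{k−2}(W)]`. -/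
theorem statement7 {V : Type} [DecidableEq V] [Fintype V] {d : ℕ} (X : SC V d)
    (i : ℕ) (hi : i < d) (η : ℝ) (hη0 : 0 < η) (hη1 : η < 1)
    (W : Finset (Finset V)) (hW : W ⊆ X.fc (i + 1))
    (k : ℕ) (hk1 : 1 ≤ k) (hk : k ≤ i + 1) :
    X.prNI (k + 1) k (X.full i W η k) (X.full i W η (k - 1)) ≤
      (k : ℝ) * X.prNI (k + 1) (k - 1) (X.full i W η k) (X.fat i W η (i + 2 - k)) := by
  obtain ⟨n, rfl⟩ : ∃ n, k = n + 1 := ⟨k - 1, by omega⟩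
  have hface : ∀ τ ∈ (X.fc (n + 1 + 1)).filter (· ∈ X.full i W η (n + 1)),
      (X.deg τ : ℝ) * (((τ.powersetCard (n + 1)).filter (· ∉ X.full i W η n)).card : ℝ) ≤
      2 * ((X.deg τ : ℝ) *
        (((τ.powersetCard n).filter (· ∉ X.fat i W η (i + 2 - (n + 1)))).card : ℝ)) := by
    intro τ hτ
    have hτX : τ ∈ X.faces ∧ τ.card = n + 2 := by
      simpa [SC.fc] using (mem_filter.mp hτ).1
    have hcount := card_filter_powersetCard_le_two_mul n τ hτX.2 (X.full i W η n)
      (X.fat i W η (i + 2 - (n + 1))) (by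
        intro σ hστ hσc hσF
        by_contra! hall
        refine hσF ?_
        rw [SC.full, SC.fc, mem_filter, mem_filter]
        refine ⟨⟨X.down_closed τ hτX.1 σ hστ, hσc⟩, fun ρ hρ hρc => ?_⟩
        have := hall ρ hρ hρc
        rwa [show i + 2 - (n + 1) = i + 1 - n by omega] at this)
    have hcount' : (((τ.powersetCard (n + 1)).filter (· ∉ X.full i W η n)).card : ℝ) ≤
        (((τ.powersetCard n).filter (· ∉ X.fat i W η (i + 2 - (n + 1)))).card : ℝ) * 2 := by
      exact_mod_cast hcount
    nlinarith [mul_le_mul_of_nonneg_left hcount' (Nat.cast_nonneg (α := ℝ) (X.deg τ))]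
  have hsum := sum_le_sum hface
  rw [← mul_sum] at hsum
  -- `C(n+2, n+1) = n + 2` and `2 C(n+2, n) = (n+2)(n+1)`
  have hc1 : (((n + 1 + 1).choose (n + 1) : ℕ) : ℝ) = n + 2 := by
    rw [Nat.choose_succ_self_right]; push_cast; ring
  have hc2 : (((n + 1 + 1).choose n : ℕ) : ℝ) = (n + 2) * (n + 1) / 2 := by
    have h := Nat.choose_succ_right_eq (n + 1 + 1) n
    rw [Nat.choose_succ_self_right, show n + 1 + 1 - n = 2 by omega] at h
    have h' : ((n : ℝ) + 1 + 1) * (n + 1) = ((n + 1 + 1).choose n : ℕ) * 2 := by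
      exact_mod_cast h
    linarith
  simp only [SC.prNI, Nat.add_sub_cancel]
  rw [hc1, hc2]
  set D : ℝ := ∑ σ ∈ X.fc (n + 1 + 1), (X.deg σ : ℝ)
  have hD : 0 ≤ D := sum_nonneg fun _ _ => Nat.cast_nonneg _
  have hn : (0 : ℝ) < (n : ℝ) + 1 := by positivity
  refine (div_le_div_of_nonneg_right hsum (by positivity)).trans (le_of_eq ?_)
  -- If `D = 0`, both quotients are `0`.
  rcases hD.eq_or_lt with h0 | h0
  · simp [← h0]
  · push_cast
    field_simp
end
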